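/- Let P be a centrally symmetric convex decagon (a convex polygon with exactly 10 vertices, symmetric about a point). If P admits a k-fold translative tiling of the plane for some positive integer k, then k ≥ 5; that is, τ(P) ≥ 5. -/

import Mathlib

open Pointwise

/-- `K + X` is a `k`-fold translative tiling of the plane: the translate multiset
`(x i)` is discrete, every point of the plane belongs to at least `k` of the translates
`K + x i`, and every point belongs to at most `k` of the translates `interior K + x i`
(multiplicity counted over the index set). -/
def IsKFoldTranslativeTiling {ι : Type} (K : Set (ℝ × ℝ)) (x : ι → ℝ × ℝ) (k : ℕ) : Prop :=
  (∀ R : ℝ, {i : ι | ‖x i‖ ≤ R}.Finite) ∧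
  (∀ p : ℝ × ℝ, ∃ s : Finset ι, k ≤ s.card ∧ ∀ i ∈ s, p - x i ∈ K) ∧
  (∀ p : ℝ × ℝ, ∀ s : Finset ι, (∀ i ∈ s, p - x i ∈ interior K) → s.card ≤ k)

/-- `P` is a (two-dimensional) convex polygon whose vertex set is the finite set `V`:
`P` is the convex hull of `V`, every element of `V` is an extreme point of `P`
(so `V` is exactly the vertex set), and `P` has nonempty interior. -/
def IsConvexPolygon (P : Set (ℝ × ℝ)) (V : Finset (ℝ × ℝ)) : Prop :=
  P = convexHull ℝ (V : Set (ℝ × ℝ)) ∧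
  (∀ v ∈ V, v ∈ Set.extremePoints ℝ P) ∧
  (interior P).Nonempty

/-- `P` is symmetric about some point `c`. -/
def IsCentrallySymmetric (P : Set (ℝ × ℝ)) : Prop :=
  ∃ c : ℝ × ℝ, ∀ p ∈ P, 2 • c - p ∈ P

/-- The segment `[a, b]` is an edge of the convex polygon `P` with vertex set `V`. -/
def IsEdge (P : Set (ℝ × ℝ)) (V : Finset (ℝ × ℝ)) (a b : ℝ × ℝ) : Prop :=
  a ∈ V ∧ b ∈ V ∧ a ≠ b ∧ segment ℝ a b ⊆ frontier P

/-- planar cross product -/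
def cr (a b : ℝ × ℝ) : ℝ := a.1 * b.2 - a.2 * b.1

/-- edge vectors of the vertex sequence `v` -/
def ee (v : ℕ → ℝ × ℝ) (j : ℕ) : ℝ × ℝ := v (j + 1) - v j

/-- half width in the direction of the `m`-th edge -/
noncomputable def hh (v : ℕ → ℝ × ℝ) (m : ℕ) : ℝ := cr (v m) (v (m + 1))

/-- slack of the `m`-th edge inequality -/
noncomputable def gg (v : ℕ → ℝ × ℝ) (m : ℕ) (y : ℝ × ℝ) : ℝ := cr (ee v m) y + hh v m

/-- cyclically ordered vertices of a centrally symmetric strictly convex decagon -/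
structure Cfg (v : ℕ → ℝ × ℝ) : Prop where
  anti : ∀ j, v (j + 5) = - v j
  pos : ∀ j t, 0 < t → t < 5 → 0 < cr (ee v j) (ee v (j + t))

/-- twice the support function of the zonotope, computed from base `i` -/
noncomputable def ss (v : ℕ → ℝ × ℝ) (i : ℕ) (w : ℝ × ℝ) : ℝ :=
  |cr w (ee v i)| + |cr w (ee v (i+1))| + |cr w (ee v (i+2))| + |cr w (ee v (i+3))|
    + |cr w (ee v (i+4))|

lemma cr_neg_left (a b : ℝ × ℝ) : cr (-a) b = - cr a b := by simp [cr]; ring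
lemma cr_neg_right (a b : ℝ × ℝ) : cr a (-b) = - cr a b := by simp [cr]; ring
lemma cr_add_right (a b c : ℝ × ℝ) : cr a (b + c) = cr a b + cr a c := by simp [cr]; ring
lemma cr_sub_right (a b c : ℝ × ℝ) : cr a (b - c) = cr a b - cr a c := by simp [cr]; ring
lemma cr_sub_left (a b c : ℝ × ℝ) : cr (a - b) c = cr a c - cr b c := by simp [cr]; ring
lemma cr_self (a : ℝ × ℝ) : cr a a = 0 := by simp [cr]; ring
lemma cr_anti (a b : ℝ × ℝ) : cr a b = - cr b a := by simp [cr]; ring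
lemma cr_smul_right (a b : ℝ × ℝ) (r : ℝ) : cr a (r • b) = r * cr a b := by simp [cr]; ring

lemma plucker (r m s z : ℝ × ℝ) : cr r s * cr m z = cr m s * cr r z + cr r m * cr s z := by
  simp [cr]; ring

namespace Cfg
variable {v : ℕ → ℝ × ℝ}

lemma eanti (h : Cfg v) (j : ℕ) : ee v (j + 5) = - ee v j := by
  have h1 := h.anti j
  have h2 := h.anti (j + 1)
  unfold ee
  rw [show j + 5 + 1 = j + 1 + 5 by ring, h1, h2]; abel

lemma shift (h : Cfg v) (i : ℕ) : Cfg (fun j => v (j + i)) := by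
  refine ⟨fun j => ?_, fun j t h0 h5 => ?_⟩
  · show v (j + 5 + i) = - v (j + i)
    rw [show j + 5 + i = j + i + 5 by ring, h.anti]
  · have := h.pos (j + i) t h0 h5
    unfold ee at *
    convert this using 3 <;> ring_nf

lemma v10 (h : Cfg v) (j : ℕ) : v (j + 10) = v j := by
  rw [show j + 10 = j + 5 + 5 by ring, h.anti, h.anti, neg_neg]

lemma e10 (h : Cfg v) (j : ℕ) : ee v (j + 10) = ee v j := by
  rw [show j + 10 = j + 5 + 5 by ring, h.eanti, h.eanti, neg_neg]

lemma h5 (h : Cfg v) (j : ℕ) : hh v (j + 5) = hh v j := by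
  unfold hh
  rw [show j + 5 + 1 = j + 1 + 5 by ring, h.anti, h.anti, cr_neg_left, cr_neg_right, neg_neg]

lemma g5 (h : Cfg v) (m : ℕ) (y : ℝ × ℝ) : gg v (m + 5) y = - cr (ee v m) y + hh v m := by
  unfold gg; rw [h.eanti, h.h5, cr_neg_left]

lemma g10 (h : Cfg v) (m : ℕ) (y : ℝ × ℝ) : gg v (m + 10) y = gg v m y := by
  unfold gg
  rw [h.e10, show m + 10 = m + 5 + 5 by ring, h.h5, h.h5]

lemma ss_succ (h : Cfg v) (i : ℕ) (w : ℝ × ℝ) : ss v (i + 1) w = ss v i w := by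
  unfold ss
  have : |cr w (ee v (i + 1 + 4))| = |cr w (ee v i)| := by
    rw [show i + 1 + 4 = i + 5 by ring, h.eanti, cr_neg_right, abs_neg]
  rw [this, show i + 1 + 1 = i + 2 by ring, show i + 1 + 2 = i + 3 by ring,
    show i + 1 + 3 = i + 4 by ring]; ring

lemma ss_base (h : Cfg v) (i j : ℕ) (w : ℝ × ℝ) : ss v i w = ss v j w := by
  have : ∀ i, ss v i w = ss v 0 w := by
    intro i
    induction i with
    | zero => rfl
    | succ n ih => rw [h.ss_succ, ih]
  rw [this i, this j]

/-- `2 v_l = - (e_l + ... + e_{l+4})` -/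
lemma two_v (h : Cfg v) (l : ℕ) (w : ℝ × ℝ) : 2 * cr w (v l) =
    - (cr w (ee v l) + cr w (ee v (l+1)) + cr w (ee v (l+2)) + cr w (ee v (l+3))
      + cr w (ee v (l+4))) := by
  have h1 := h.anti l
  unfold ee
  simp only [cr_sub_right]
  rw [show l + 4 + 1 = l + 5 by ring, h1, cr_neg_right, show l + 1 + 1 = l + 2 by ring,
    show l + 2 + 1 = l + 3 by ring, show l + 3 + 1 = l + 4 by ring]
  ring

lemma hh_eq (m : ℕ) : hh v m = - cr (ee v m) (v m) := by
  unfold hh ee; rw [cr_sub_left, cr_self, cr_anti (v m)]; ring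

lemma two_h (h : Cfg v) (m i : ℕ) : 2 * hh v m = ss v i (ee v m) := by
  rw [h.ss_base i m, hh_eq]
  have := h.two_v m (ee v m)
  have h1 := h.pos m 1 (by norm_num) (by norm_num)
  have h2 := h.pos m 2 (by norm_num) (by norm_num)
  have h3 := h.pos m 3 (by norm_num) (by norm_num)
  have h4 := h.pos m 4 (by norm_num) (by norm_num)
  have h0 := cr_self (ee v m)
  unfold ss
  rw [abs_of_pos h1, abs_of_pos h2, abs_of_pos h3, abs_of_pos h4, h0, abs_zero]
  linarith

/-- all cross products of edges, in a window -/
lemma win (h : Cfg v) (l a b : ℕ) (hab : a < b) (hb : b < a + 5) :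
    0 < cr (ee v (l + a)) (ee v (l + b)) := by
  have := h.pos (l + a) (b - a) (by omega) (by omega)
  rwa [show l + a + (b - a) = l + b by omega] at this

lemma hpos (h : Cfg v) (m : ℕ) : 0 < hh v m := by
  have := h.two_h m m
  have h1 := h.pos m 1 (by norm_num) (by norm_num)
  unfold ss at this
  have : 0 < |cr (ee v m) (ee v (m+1))| := abs_pos.2 h1.ne'
  have := abs_nonneg (cr (ee v m) (ee v (m)))
  have := abs_nonneg (cr (ee v m) (ee v (m+2)))
  have := abs_nonneg (cr (ee v m) (ee v (m+3)))
  have := abs_nonneg (cr (ee v m) (ee v (m+4)))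
  linarith

lemma two_g_v (h : Cfg v) (l m : ℕ) : 2 * gg v m (v l) =
    (|cr (ee v m) (ee v l)| - cr (ee v m) (ee v l))
    + (|cr (ee v m) (ee v (l+1))| - cr (ee v m) (ee v (l+1)))
    + (|cr (ee v m) (ee v (l+2))| - cr (ee v m) (ee v (l+2)))
    + (|cr (ee v m) (ee v (l+3))| - cr (ee v m) (ee v (l+3)))
    + (|cr (ee v m) (ee v (l+4))| - cr (ee v m) (ee v (l+4))) := by
  unfold gg
  rw [mul_add, h.two_h m l, h.two_v]
  unfold ss
  ring

lemma g_v_self (l : ℕ) : gg v l (v l) = 0 := by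
  unfold gg; rw [hh_eq]; ring

lemma g_v_succ (l : ℕ) : gg v l (v (l + 1)) = 0 := by
  unfold gg ee hh; rw [cr_sub_left, cr_self]; ring

lemma g_v_pos (h : Cfg v) (l r : ℕ) (h1 : 1 ≤ r) (h8 : r ≤ 8) : 0 < gg v (l + r) (v l) := by
  have key := h.two_g_v l (l + r)
  have n0 := le_abs_self (cr (ee v (l + r)) (ee v l))
  have n1 := le_abs_self (cr (ee v (l + r)) (ee v (l+1)))
  have n2 := le_abs_self (cr (ee v (l + r)) (ee v (l+2)))
  have n3 := le_abs_self (cr (ee v (l + r)) (ee v (l+3)))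
  have n4 := le_abs_self (cr (ee v (l + r)) (ee v (l+4)))
  by_cases hr : r ≤ 4
  · have := h.win l 0 r (by omega) (by omega)
    rw [cr_anti] at this
    simp only [add_zero] at this
    have := abs_nonneg (cr (ee v (l + r)) (ee v l))
    linarith
  · have := h.win l (r - 5) 4 (by omega) (by omega)
    have e1 : ee v (l + r) = - ee v (l + (r - 5)) := by
      rw [← h.eanti]; congr 1; omega
    have : cr (ee v (l + r)) (ee v (l+4)) < 0 := by
      rw [e1, cr_neg_left]; linarith
    have := abs_nonneg (cr (ee v (l + r)) (ee v (l + 4)))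
    linarith

/-- triangle inequality with positive coefficients -/
lemma abs_tri {r m s : ℝ × ℝ} (z : ℝ × ℝ) (h1 : 0 < cr r s) (h2 : 0 < cr m s) (h3 : 0 < cr r m) :
    cr r s * |cr m z| ≤ cr m s * |cr r z| + cr r m * |cr s z| := by
  have := plucker r m s z
  calc cr r s * |cr m z| = |cr r s * cr m z| := by rw [abs_mul, abs_of_pos h1]
    _ = |cr m s * cr r z + cr r m * cr s z| := by rw [this]
    _ ≤ |cr m s * cr r z| + |cr r m * cr s z| := abs_add_le _ _
    _ = _ := by rw [abs_mul, abs_mul, abs_of_pos h2, abs_of_pos h3]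

/-- nonadjacent edges are not simultaneously active -/
lemma not_active (h : Cfg v) (r a : ℕ) (ha : 2 ≤ a) (ha4 : a ≤ 4) (y : ℝ × ℝ)
    (h0 : gg v r y = 0) (h1 : gg v (r + a) y = 0) (h2 : 0 ≤ gg v (r + 1) y) : False := by
  have c1 := h.win r 0 a (by omega) (by omega)
  have c2 := h.win r 1 a (by omega) (by omega)
  have c3 := h.win r 0 1 (by omega) (by omega)
  simp only [add_zero] at c1 c3
  have t0 := abs_tri (ee v r) c1 c2 c3
  have t1 := abs_tri (ee v (r+1)) c1 c2 c3
  have t2 := abs_tri (ee v (r+2)) c1 c2 c3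
  have t3 := abs_tri (ee v (r+3)) c1 c2 c3
  have t4 := abs_tri (ee v (r+4)) c1 c2 c3
  have s1 : cr (ee v r) (ee v (r + a)) * |cr (ee v (r+1)) (ee v (r+1))| <
      cr (ee v (r+1)) (ee v (r + a)) * |cr (ee v r) (ee v (r+1))| := by
    rw [cr_self, abs_zero, mul_zero]
    exact mul_pos c2 (abs_pos.2 c3.ne')
  have s2 : 0 ≤ cr (ee v r) (ee v (r + 1)) * |cr (ee v (r + a)) (ee v (r+1))| := by positivity
  have H1 := h.two_h r r
  have H2 := h.two_h (r+1) r
  have H3 := h.two_h (r+a) r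
  have p := plucker (ee v r) (ee v (r+1)) (ee v (r+a)) y
  unfold gg at h0 h1 h2
  unfold ss at H1 H2 H3
  have q0 : cr (ee v r) y = - hh v r := by linarith
  have q1 : cr (ee v (r+a)) y = - hh v (r+a) := by linarith
  rw [q0, q1] at p
  have q2 := mul_nonneg c1.le h2
  have E1 := congrArg (fun t => cr (ee v (r + 1)) (ee v (r + a)) * t) H1
  have E2 := congrArg (fun t => cr (ee v r) (ee v (r + a)) * t) H2
  have E3 := congrArg (fun t => cr (ee v r) (ee v (r + 1)) * t) H3
  simp only [mul_add] at E1 E2 E3 q2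
  linarith

lemma eq_of_cr {a b y z : ℝ × ℝ} (hab : 0 < cr a b) (h1 : cr a y = cr a z) (h2 : cr b y = cr b z) :
    y = z := by
  have k1 : cr a (y - z) = 0 := by rw [cr_sub_right]; linarith
  have k2 : cr b (y - z) = 0 := by rw [cr_sub_right]; linarith
  rw [← sub_eq_zero]
  set w := y - z
  unfold cr at *
  have e1 : (a.1 * b.2 - a.2 * b.1) * w.1 = 0 := by linear_combination b.1 * k1 - a.1 * k2
  have e2 : (a.1 * b.2 - a.2 * b.1) * w.2 = 0 := by linear_combination b.2 * k1 - a.2 * k2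
  ext
  · simpa [hab.ne'] using e1
  · simpa [hab.ne'] using e2

lemma eq_v (h : Cfg v) (r : ℕ) (y : ℝ × ℝ) (h0 : gg v r y = 0) (h1 : gg v (r + 1) y = 0) :
    y = v (r + 1) := by
  have c3 := h.win r 0 1 (by omega) (by omega)
  apply eq_of_cr c3
  · have := g_v_succ (v := v) r
    unfold gg at *; simp only [add_zero]; linarith
  · have := g_v_self (v := v) (r + 1)
    unfold gg at *; linarith

/-- the chord lemma -/
lemma chord (h : Cfg v) (j s : ℕ) (hs : 1 ≤ s) (hs4 : s ≤ 4) (y : ℝ × ℝ)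
    (h0 : 0 < gg v j y) (h0' : 0 < gg v (j + 5) y) (h1 : gg v (j + s) y = 0)
    (m : ℕ) (hm : 1 ≤ m) (hm4 : m ≤ 4) : 0 < gg v (j + m + 5) (y - ee v j) := by
  rw [h.g5] at h0' ⊢
  unfold gg at h0 h1
  rw [cr_sub_right]
  have cjs := h.win j 0 s (by omega) (by omega)
  have cjm := h.win j 0 m (by omega) (by omega)
  simp only [add_zero] at cjs cjm
  rw [cr_anti _ (ee v j)]
  have H1 := h.two_h j j
  have H2 := h.two_h (j+m) j
  have H3 := h.two_h (j+s) j
  unfold ss at H1 H2 H3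
  have p := plucker (ee v j) (ee v (j+m)) (ee v (j+s)) y
  set a := ee v j
  have q1 : cr (ee v (j+s)) y = - hh v (j+s) := by linarith
  rw [q1] at p
  -- triangle inequalities
  have tri : ∀ z, |cr (ee v (j+m)) (ee v (j+s))| * |cr a z| ≤
      cr a (ee v (j+s)) * |cr (ee v (j+m)) z| + cr a (ee v (j+m)) * |cr (ee v (j+s)) z| := by
    intro z
    have pz := plucker a (ee v (j+m)) (ee v (j+s)) z
    calc |cr (ee v (j+m)) (ee v (j+s))| * |cr a z|
        = |cr a (ee v (j+s)) * cr (ee v (j+m)) z - cr a (ee v (j+m)) * cr (ee v (j+s)) z| := by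
          rw [← abs_mul]; congr 1; linarith
      _ ≤ |cr a (ee v (j+s)) * cr (ee v (j+m)) z| + |cr a (ee v (j+m)) * cr (ee v (j+s)) z| :=
          abs_sub _ _
      _ = _ := by rw [abs_mul, abs_mul, abs_of_pos cjs, abs_of_pos cjm]
  have t1 := tri (ee v (j+1))
  have t2 := tri (ee v (j+2))
  have t3 := tri (ee v (j+3))
  have t4 := tri (ee v (j+4))
  have z0 : |cr a a| = 0 := by rw [cr_self, abs_zero]
  have z1 : |cr (ee v (j+m)) a| = cr a (ee v (j+m)) := by rw [cr_anti, abs_neg, abs_of_pos cjm]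
  have z2 : |cr (ee v (j+s)) a| = cr a (ee v (j+s)) := by rw [cr_anti, abs_neg, abs_of_pos cjs]
  rw [z0] at H1
  rw [z1] at H2
  rw [z2] at H3
  have E1 := congrArg (fun t => |cr (ee v (j+m)) (ee v (j+s))| * t) H1
  have E2 := congrArg (fun t => cr a (ee v (j + s)) * t) H2
  have E3 := congrArg (fun t => cr a (ee v (j + m)) * t) H3
  have main : |cr (ee v (j+m)) (ee v (j+s))| * hh v j ≤ cr a (ee v (j + s)) * hh v (j+m)
      + cr a (ee v (j + m)) * hh v (j+s) - cr a (ee v (j + s)) * cr a (ee v (j + m)) := by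
    simp only [mul_add] at E1 E2 E3
    linarith
  have hj := h.hpos (j+m)
  suffices 0 < cr a (ee v (j+s)) * (hh v (j+m) - cr a (ee v (j+m)) - cr (ee v (j+m)) y) by
    have := pos_of_mul_pos_right this cjs.le
    linarith
  have lt : cr (ee v (j+m)) (ee v (j+s)) * cr a y ≤ |cr (ee v (j+m)) (ee v (j+s))| * |cr a y| := by
    rw [← abs_mul]; exact le_abs_self _
  have lt2 : |cr a y| < hh v j := abs_lt.2 ⟨by linarith, by linarith⟩
  by_cases hz : cr (ee v (j+m)) (ee v (j+s)) = 0
  · -- then m = s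
    have hms : m = s := by
      by_contra hne
      rcases lt_or_gt_of_ne hne with hlt | hlt
      · exact (h.win j m s hlt (by omega)).ne' hz
      · have := h.win j s m hlt (by omega)
        rw [cr_anti] at hz; linarith
    subst hms
    have n1 : 0 < cr a (ee v (j + m)) * cr a (ee v (j + m)) := by positivity
    rw [q1]
    have : cr a (ee v (j + m)) < 2 * hh v (j + m) := by
      rw [H2]
      have n1 := abs_nonneg (cr (ee v (j+m)) (ee v (j+1)))
      have n2 := abs_nonneg (cr (ee v (j+m)) (ee v (j+2)))
      have n3 := abs_nonneg (cr (ee v (j+m)) (ee v (j+3)))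
      have n4 := abs_nonneg (cr (ee v (j+m)) (ee v (j+4)))
      by_cases hm1 : m = 1
      · subst hm1
        have := h.win j 1 2 (by omega) (by omega)
        have := abs_pos.2 this.ne'
        linarith
      · have := h.win j 1 m (by omega) (by omega)
        rw [cr_anti] at this
        have : 0 < |cr (ee v (j+m)) (ee v (j+1))| := abs_pos.2 (by linarith)
        linarith
    apply mul_pos cjs; linarith
  · have := abs_pos.2 hz
    have := mul_lt_mul_of_pos_left lt2 this
    nlinarith

lemma z_ne (h : Cfg v) (i : ℕ) : v (i + 3) - ee v i ≠ v (i + 9) - ee v (i + 6) := by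
  intro hz
  have c := h.win i 2 4 (by omega) (by omega)
  have : ee v (i + 2) = ee v (i + 4) := by
    have a5 := h.anti i
    have a6 := h.anti (i+1)
    have a7 := h.anti (i+2)
    have a9 := h.anti (i+4)
    unfold ee at *
    rw [show i + 6 + 1 = i + 2 + 5 by ring, show i + 9 = i + 4 + 5 by ring,
      show i + 6 = i + 1 + 5 by ring, a6, a7, a9] at hz
    rw [show i + 2 + 1 = i + 3 by ring, show i + 4 + 1 = i + 5 by ring, a5]
    have hz' : v (i+3) = - v (i+4) + v (i+2) - v i := by
      have := eq_add_of_sub_eq hz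
      rw [this]; abel
    rw [hz']; abel
  rw [this, cr_self] at c
  exact lt_irrefl _ c

end Cfg

/-- the closed decagon -/
def QQ (v : ℕ → ℝ × ℝ) : Set (ℝ × ℝ) := {y | ∀ m, 0 ≤ gg v m y}
/-- the open decagon -/
def QI (v : ℕ → ℝ × ℝ) : Set (ℝ × ℝ) := {y | ∀ m, 0 < gg v m y}
/-- the half open decagon with base `i` -/
def RR (v : ℕ → ℝ × ℝ) (i : ℕ) : Set (ℝ × ℝ) :=
  {y | (∀ t < 5, 0 ≤ gg v (i + t) y) ∧ ∀ t < 5, 0 < gg v (i + 5 + t) y}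
/-- the relatively open edge `j` -/
def RE (v : ℕ → ℝ × ℝ) (j : ℕ) : Set (ℝ × ℝ) :=
  {y | gg v j y = 0 ∧ ∀ t, 1 ≤ t → t ≤ 9 → 0 < gg v (j + t) y}

/-- number of translates `i` with `p - x i ∈ T` -/
noncomputable def cnt {ι : Type} (x : ι → ℝ × ℝ) (T : Set (ℝ × ℝ)) (p : ℝ × ℝ) : ℕ :=
  Set.ncard {i | p - x i ∈ T}

namespace Cfg
variable {v : ℕ → ℝ × ℝ}

lemma g_mod (h : Cfg v) (m : ℕ) (y : ℝ × ℝ) : gg v m y = gg v (m % 10) y := by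
  induction m using Nat.strong_induction_on with
  | _ m ih =>
    by_cases hm : m < 10
    · rw [Nat.mod_eq_of_lt hm]
    · obtain ⟨n, rfl⟩ : ∃ n, m = n + 10 := ⟨m - 10, by omega⟩
      rw [h.g10, ih n (by omega)]; congr 1; omega

lemma g_congr (h : Cfg v) {m n : ℕ} (hmn : m % 10 = n % 10) (y : ℝ × ℝ) : gg v m y = gg v n y := by
  rw [h.g_mod m, h.g_mod n, hmn]

lemma v_mod (h : Cfg v) (m : ℕ) : v m = v (m % 10) := by
  induction m using Nat.strong_induction_on with
  | _ m ih =>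
    by_cases hm : m < 10
    · rw [Nat.mod_eq_of_lt hm]
    · obtain ⟨n, rfl⟩ : ∃ n, m = n + 10 := ⟨m - 10, by omega⟩
      rw [h.v10, ih n (by omega)]; congr 1; omega

lemma g_win (h : Cfg v) (i m : ℕ) : ∃ t < 10, ∀ y, gg v m y = gg v (i + t) y := by
  refine ⟨(m + 9 * i) % 10, by omega, fun y => h.g_congr (by omega) y⟩

lemma RR_sub (h : Cfg v) (i : ℕ) : RR v i ⊆ QQ v := by
  intro y hy m
  obtain ⟨t, ht, e⟩ := h.g_win i m
  rw [e]
  by_cases h5 : t < 5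
  · exact hy.1 t h5
  · have := (hy.2 (t - 5) (by omega)).le
    rwa [show i + 5 + (t - 5) = i + t by omega] at this

lemma QI_sub (i : ℕ) : QI v ⊆ RR v i := fun _ hy => ⟨fun _ _ => (hy _).le, fun _ _ => hy _⟩

lemma RE_sub (h : Cfg v) (i t : ℕ) (ht : t < 5) : RE v (i + t) ⊆ RR v i := by
  intro y hy
  have key : ∀ s < 10, s ≠ t → 0 < gg v (i + s) y := by
    intro s hs hst
    have := hy.2 ((s + 10 - t) % 10) (by omega) (by omega)
    rwa [h.g_congr (n := i + s) (by omega)] at this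
  refine ⟨fun s hs => ?_, fun s hs => ?_⟩
  · by_cases hst : s = t
    · subst hst; exact hy.1.ge
    · exact (key s (by omega) hst).le
  · have := key (5 + s) (by omega) (by omega)
    rwa [← add_assoc] at this

lemma v_sub (h : Cfg v) (i t : ℕ) (ht0 : 1 ≤ t) (ht : t < 5) : v (i + t) ∈ RR v i := by
  have key : ∀ s < 10, s ≠ t → s + 1 ≠ t → 0 < gg v (i + s) (v (i + t)) := by
    intro s hs hst hst1
    have := h.g_v_pos (i + t) ((s + 10 - t) % 10) (by omega) (by omega)
    rwa [h.g_congr (n := i + s) (by omega)] at this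
  refine ⟨fun s hs => ?_, fun s hs => ?_⟩
  · by_cases hst : s = t
    · subst hst; exact (g_v_self _).ge
    · by_cases hst1 : s + 1 = t
      · subst hst1; exact (g_v_succ _).ge
      · exact (key s (by omega) hst hst1).le
  · have := key (5 + s) (by omega) (by omega) (by omega)
    rwa [← add_assoc] at this

lemma g_add (m : ℕ) (y u : ℝ × ℝ) (r : ℝ) : gg v m (y + r • u) = gg v m y + r * cr (ee v m) u := by
  unfold gg; rw [cr_add_right, cr_smul_right]; ring

open Filter Topology in
/-- behaviour along the generic direction -/
lemma eventually_dir (h : Cfg v) (i : ℕ) (y : ℝ × ℝ) :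
    ∀ᶠ r in 𝓝[>] (0 : ℝ),
      (y ∈ RR v i → y + r • (ee v (i + 4) - ee v i) ∈ QI v) ∧
      (y ∉ RR v i → y + r • (ee v (i + 4) - ee v i) ∉ QQ v) := by
  set u := ee v (i + 4) - ee v i with hu
  have upos : ∀ t < 5, 0 < cr (ee v (i + t)) u := by
    intro t ht
    rw [hu, cr_sub_right, cr_anti _ (ee v i)]
    by_cases h0 : t = 0
    · subst h0
      have := h.win i 0 4 (by omega) (by omega)
      simp only [add_zero, cr_self] at *
      linarith
    · have h1 := h.win i 0 t (by omega) (by omega)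
      simp only [add_zero] at h1
      by_cases h4 : t = 4
      · subst h4; rw [cr_self]; linarith
      · have := h.win i t 4 (by omega) (by omega)
        linarith
  have uneg : ∀ t < 5, cr (ee v (i + 5 + t)) u < 0 := by
    intro t ht
    have := upos t ht
    rw [show i + 5 + t = i + t + 5 by ring, h.eanti, cr_neg_left]; linarith
  have tend : ∀ m, Tendsto (fun r : ℝ => gg v m (y + r • u)) (𝓝[>] 0) (𝓝 (gg v m y)) := by
    intro m
    simp only [g_add]
    have : Tendsto (fun r : ℝ => gg v m y + r * cr (ee v m) u) (𝓝 0)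
        (𝓝 (gg v m y + 0 * cr (ee v m) u)) :=
      Continuous.tendsto (by fun_prop) 0
    rw [zero_mul, add_zero] at this
    exact this.mono_left nhdsWithin_le_nhds
  have pos0 : ∀ᶠ r in 𝓝[>] (0 : ℝ), 0 < r := eventually_mem_nhdsWithin
  by_cases hy : y ∈ RR v i
  · have e1 : ∀ᶠ r in 𝓝[>] (0 : ℝ), ∀ t < 5, 0 < gg v (i + 5 + t) (y + r • u) := by
      have : ∀ᶠ r in 𝓝[>] (0 : ℝ), ∀ t ∈ Finset.range 5, 0 < gg v (i + 5 + t) (y + r • u) := by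
        rw [Filter.eventually_all_finset]
        intro t ht
        exact (tend _).eventually_const_lt (hy.2 t (Finset.mem_range.1 ht))
      filter_upwards [this] with r hr t ht using hr t (Finset.mem_range.2 ht)
    filter_upwards [e1, pos0] with r hr hr0
    refine ⟨fun _ m => ?_, fun hn => absurd hy hn⟩
    obtain ⟨t, ht, e⟩ := h.g_win i m
    rw [e]
    by_cases h5 : t < 5
    · rw [g_add]
      have := mul_pos hr0 (upos t h5)
      have := hy.1 t h5
      linarith
    · have := hr (t - 5) (by omega)
      rwa [show i + 5 + (t - 5) = i + t by omega] at this
  · suffices ∀ᶠ r in 𝓝[>] (0 : ℝ), ∃ m, gg v m (y + r • u) < 0 by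
      filter_upwards [this] with r hr
      obtain ⟨m, hm⟩ := hr
      exact ⟨fun hh => absurd hh hy, fun _ hq => absurd (hq m) (not_le.2 hm)⟩
    by_cases h1 : ∀ t < 5, 0 ≤ gg v (i + t) y
    · have : ¬ ∀ t < 5, 0 < gg v (i + 5 + t) y := fun h2 => hy ⟨h1, h2⟩
      push Not at this
      obtain ⟨t, ht, hle⟩ := this
      filter_upwards [pos0] with r hr0
      refine ⟨i + 5 + t, ?_⟩
      rw [g_add]
      have := mul_neg_of_pos_of_neg hr0 (uneg t ht)
      linarith
    · push Not at h1
      obtain ⟨t, ht, hlt⟩ := h1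
      filter_upwards [(tend (i + t)).eventually_lt_const hlt] with r hr
      exact ⟨i + t, hr⟩

/-- pointwise classification -/
lemma classify (h : Cfg v) (i : ℕ) (y : ℝ × ℝ) (hy : y ∈ RR v i) (a : ℕ) (ha : a < 5)
    (h0 : gg v (i + a) y = 0) :
    y ∈ RE v (i + a) ∨ (a < 4 ∧ y = v (i + a + 1)) ∨ (0 < a ∧ y = v (i + a)) := by
  by_cases h1 : a < 4 ∧ gg v (i + a + 1) y = 0
  · right; left; exact ⟨h1.1, h.eq_v _ _ h0 h1.2⟩
  by_cases h2 : 0 < a ∧ gg v (i + (a - 1)) y = 0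
  · right; right
    refine ⟨h2.1, ?_⟩
    have := h.eq_v (i + (a - 1)) y h2.2 (by rwa [show i + (a - 1) + 1 = i + a by omega])
    rwa [show i + (a - 1) + 1 = i + a by omega] at this
  left
  have hge := h.RR_sub i hy
  have key : ∀ s < 10, s ≠ a → 0 < gg v (i + s) y := by
    intro s hs hsa
    by_cases hs5 : s < 5
    · refine lt_of_le_of_ne (hy.1 s hs5) (fun hz => ?_)
      have hz := hz.symm
      rcases lt_or_gt_of_ne hsa with hlt | hlt
      · by_cases hadj : s + 1 = a
        · apply h2; refine ⟨by omega, ?_⟩; rwa [show a - 1 = s by omega]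
        · exact h.not_active (i + s) (a - s) (by omega) (by omega) y hz
            (by rwa [show i + s + (a - s) = i + a by omega]) (hge _)
      · by_cases hadj : a + 1 = s
        · apply h1; refine ⟨by omega, ?_⟩; rwa [show i + a + 1 = i + s by omega]
        · exact h.not_active (i + a) (s - a) (by omega) (by omega) y h0
            (by rwa [show i + a + (s - a) = i + s by omega]) (hge _)
    · have := hy.2 (s - 5) (by omega)
      rwa [show i + 5 + (s - 5) = i + s by omega] at this
  refine ⟨h0, fun t ht1 ht9 => ?_⟩
  have := key ((a + t) % 10) (by omega) (by omega)
  rwa [h.g_congr (n := i + a + t) (by omega)] at this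

/-- the chord step: `y ∈ RR j` is interior, on edge `j`, equal to `v (j+1)`, or pushed inside -/
lemma chord_step (h : Cfg v) (j : ℕ) (y : ℝ × ℝ) (hy : y ∈ RR v j) :
    y ∈ QI v ∨ y ∈ RE v j ∨ y = v (j + 1) ∨ y - ee v j ∈ QI v := by
  by_cases h0 : gg v j y = 0
  · rcases h.classify j y hy 0 (by omega) (by simpa using h0) with h1 | h1 | h1
    · right; left; simpa using h1
    · right; right; left; simpa using h1.2
    · omega
  by_cases h1 : ∀ t < 5, gg v (j + t) y ≠ 0
  · left
    intro m
    obtain ⟨t, ht, e⟩ := h.g_win j m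
    rw [e]
    by_cases h5 : t < 5
    · exact lt_of_le_of_ne (hy.1 t h5) (h1 t h5).symm
    · have := (hy.2 (t - 5) (by omega))
      rwa [show j + 5 + (t - 5) = j + t by omega] at this
  push Not at h1
  obtain ⟨s, hs, hz⟩ := h1
  have hs0 : s ≠ 0 := by rintro rfl; exact h0 (by simpa using hz)
  right; right; right
  have hj : 0 < gg v j y := lt_of_le_of_ne (hy.1 0 (by omega)) (Ne.symm h0)
  have hj5 : 0 < gg v (j + 5) y := hy.2 0 (by omega)
  intro m
  obtain ⟨t, ht, e⟩ := h.g_win j m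
  rw [e]
  have sub : ∀ m, gg v m (y - ee v j) = gg v m y + cr (ee v j) (ee v m) := by
    intro m; unfold gg; rw [cr_sub_right, cr_anti (ee v j)]; ring
  by_cases t0 : t = 0
  · subst t0; rw [sub]; simp only [add_zero, cr_self]; exact hj
  by_cases t5 : t = 5
  · subst t5; rw [sub, h.eanti, cr_neg_right, cr_self]; linarith
  by_cases h5 : t < 5
  · rw [sub]
    have := h.win j 0 t (by omega) (by omega)
    simp only [add_zero] at this
    have := hy.1 t h5
    linarith
  · have := h.chord j s (by omega) (by omega) y hj hj5 hz (t - 5) (by omega) (by omega)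
    rwa [show j + (t - 5) + 5 = j + t by omega] at this

/-- the inner translated vertex -/
lemma z_mem (h : Cfg v) (i : ℕ) : v (i + 3) - ee v i ∈ QI v := by
  have hy := h.v_sub i 3 (by omega) (by omega)
  have a0 := h.g_v_pos (i + 3) 7 (by omega) (by omega)
  rw [h.g_congr (n := i) (by omega)] at a0
  rcases h.chord_step i _ hy with h1 | h1 | h1 | h1
  · have := h1 (i + 3)
    rw [g_v_self] at this
    exact absurd this (lt_irrefl _)
  · exact absurd h1.1 a0.ne'
  · rw [h1, g_v_succ] at a0
    exact absurd a0 (lt_irrefl _)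
  · exact h1

end Cfg

open Classical in
/-- indicator with values in `ℕ` -/
noncomputable def ind (T : Set (ℝ × ℝ)) (y : ℝ × ℝ) : ℕ := if y ∈ T then 1 else 0

namespace Cfg
variable {v : ℕ → ℝ × ℝ}

open Classical in
lemma ind_RR (h : Cfg v) (i : ℕ) (y : ℝ × ℝ) : ind (RR v i) y =
    ind (QI v) y + (ind (RE v i) y + ind (RE v (i+1)) y + ind (RE v (i+2)) y + ind (RE v (i+3)) y
      + ind (RE v (i+4)) y) + (ind {v (i+1)} y + ind {v (i+2)} y + ind {v (i+3)} y
      + ind {v (i+4)} y) := by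
  by_cases hy : y ∈ RR v i
  · have hge := h.RR_sub i hy
    have excl : ∀ a b, a + 2 ≤ b → b < 5 → ¬ (gg v (i + a) y = 0 ∧ gg v (i + b) y = 0) := by
      rintro a b hab hb ⟨h1, h2⟩
      exact h.not_active (i + a) (b - a) (by omega) (by omega) y h1
        (by rwa [show i + a + (b - a) = i + b by omega]) (hge _)
    have hv : ∀ a < 4, (y = v (i + (a + 1)) ↔ gg v (i + a) y = 0 ∧ gg v (i + (a + 1)) y = 0) := by
      intro a ha
      constructor
      · rintro rfl; exact ⟨g_v_succ _, g_v_self _⟩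
      · rintro ⟨h1, h2⟩; exact h.eq_v _ _ h1 h2
    have hQ : y ∈ QI v ↔ ∀ t < 5, gg v (i + t) y ≠ 0 := by
      constructor
      · intro hq t _; exact (hq _).ne'
      · intro h1 m
        obtain ⟨t, ht, e⟩ := h.g_win i m
        rw [e]
        by_cases h5 : t < 5
        · exact lt_of_le_of_ne (hy.1 t h5) (h1 t h5).symm
        · have := (hy.2 (t - 5) (by omega))
          rwa [show i + 5 + (t - 5) = i + t by omega] at this
    have hE : ∀ a < 5, (y ∈ RE v (i + a) ↔ gg v (i + a) y = 0 ∧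
        ∀ s < 5, s ≠ a → gg v (i + s) y ≠ 0) := by
      intro a ha
      constructor
      · intro hr
        refine ⟨hr.1, fun s hs hsa => ?_⟩
        have := hr.2 ((s + 10 - a) % 10) (by omega) (by omega)
        rw [h.g_congr (n := i + s) (by omega)] at this
        exact this.ne'
      · rintro ⟨h0, h1⟩
        rcases h.classify i y hy a ha h0 with h2 | ⟨h2, h3⟩ | ⟨h2, h3⟩
        · exact h2
        · exact absurd ((hv a h2).1 h3).2 (h1 (a + 1) (by omega) (by omega))
        · have := (hv (a - 1) (by omega)).1 (by rwa [show a - 1 + 1 = a by omega])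
          exact absurd this.1 (h1 (a - 1) (by omega) (by omega))
    have hQ' : y ∈ QI v ↔ gg v i y ≠ 0 ∧ gg v (i+1) y ≠ 0 ∧ gg v (i+2) y ≠ 0 ∧ gg v (i+3) y ≠ 0 ∧
        gg v (i+4) y ≠ 0 := by
      rw [hQ]
      constructor
      · intro hh
        exact ⟨hh 0 (by omega), hh 1 (by omega), hh 2 (by omega), hh 3 (by omega), hh 4 (by omega)⟩
      · rintro ⟨h0, h1, h2, h3, h4⟩ t ht
        interval_cases t <;> assumption
    have e0 : y ∈ RE v i ↔ gg v i y = 0 ∧ gg v (i+1) y ≠ 0 ∧ gg v (i+2) y ≠ 0 ∧ gg v (i+3) y ≠ 0 ∧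
        gg v (i+4) y ≠ 0 := by
      have := hE 0 (by omega)
      simp only [add_zero] at this
      rw [this]
      constructor
      · rintro ⟨h0, hh⟩
        exact ⟨h0, hh 1 (by omega) (by omega), hh 2 (by omega) (by omega),
          hh 3 (by omega) (by omega), hh 4 (by omega) (by omega)⟩
      · rintro ⟨h0, h1, h2, h3, h4⟩
        refine ⟨h0, fun t ht hne => ?_⟩
        interval_cases t <;> first | assumption | exact absurd rfl hne
    have e1 : y ∈ RE v (i+1) ↔ gg v (i+1) y = 0 ∧ gg v i y ≠ 0 ∧ gg v (i+2) y ≠ 0 ∧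
        gg v (i+3) y ≠ 0 ∧ gg v (i+4) y ≠ 0 := by
      rw [hE 1 (by omega)]
      constructor
      · rintro ⟨h0, hh⟩
        exact ⟨h0, hh 0 (by omega) (by omega), hh 2 (by omega) (by omega),
          hh 3 (by omega) (by omega), hh 4 (by omega) (by omega)⟩
      · rintro ⟨h0, h1, h2, h3, h4⟩
        refine ⟨h0, fun t ht hne => ?_⟩
        interval_cases t <;> first | assumption | exact absurd rfl hne
    have e2 : y ∈ RE v (i+2) ↔ gg v (i+2) y = 0 ∧ gg v i y ≠ 0 ∧ gg v (i+1) y ≠ 0 ∧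
        gg v (i+3) y ≠ 0 ∧ gg v (i+4) y ≠ 0 := by
      rw [hE 2 (by omega)]
      constructor
      · rintro ⟨h0, hh⟩
        exact ⟨h0, hh 0 (by omega) (by omega), hh 1 (by omega) (by omega),
          hh 3 (by omega) (by omega), hh 4 (by omega) (by omega)⟩
      · rintro ⟨h0, h1, h2, h3, h4⟩
        refine ⟨h0, fun t ht hne => ?_⟩
        interval_cases t <;> first | assumption | exact absurd rfl hne
    have e3 : y ∈ RE v (i+3) ↔ gg v (i+3) y = 0 ∧ gg v i y ≠ 0 ∧ gg v (i+1) y ≠ 0 ∧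
        gg v (i+2) y ≠ 0 ∧ gg v (i+4) y ≠ 0 := by
      rw [hE 3 (by omega)]
      constructor
      · rintro ⟨h0, hh⟩
        exact ⟨h0, hh 0 (by omega) (by omega), hh 1 (by omega) (by omega),
          hh 2 (by omega) (by omega), hh 4 (by omega) (by omega)⟩
      · rintro ⟨h0, h1, h2, h3, h4⟩
        refine ⟨h0, fun t ht hne => ?_⟩
        interval_cases t <;> first | assumption | exact absurd rfl hne
    have e4 : y ∈ RE v (i+4) ↔ gg v (i+4) y = 0 ∧ gg v i y ≠ 0 ∧ gg v (i+1) y ≠ 0 ∧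
        gg v (i+2) y ≠ 0 ∧ gg v (i+3) y ≠ 0 := by
      rw [hE 4 (by omega)]
      constructor
      · rintro ⟨h0, hh⟩
        exact ⟨h0, hh 0 (by omega) (by omega), hh 1 (by omega) (by omega),
          hh 2 (by omega) (by omega), hh 3 (by omega) (by omega)⟩
      · rintro ⟨h0, h1, h2, h3, h4⟩
        refine ⟨h0, fun t ht hne => ?_⟩
        interval_cases t <;> first | assumption | exact absurd rfl hne
    have v1 := hv 0 (by omega)
    have v2 := hv 1 (by omega)
    have v3 := hv 2 (by omega)
    have v4 := hv 3 (by omega)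
    have x1 := excl 0 2 (by omega) (by omega)
    have x2 := excl 0 3 (by omega) (by omega)
    have x3 := excl 0 4 (by omega) (by omega)
    have x4 := excl 1 3 (by omega) (by omega)
    have x5 := excl 1 4 (by omega) (by omega)
    have x6 := excl 2 4 (by omega) (by omega)
    simp only [add_zero, zero_add, Nat.reduceAdd] at v1 v2 v3 v4 x1 x2 x3
    unfold ind
    simp only [Set.mem_singleton_iff, hy, hQ', e0, e1, e2, e3, e4, v1, v2, v3, v4]
    clear hQ' e0 e1 e2 e3 e4 v1 v2 v3 v4 hQ hE hv excl hge hy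
    by_cases a0 : gg v i y = 0 <;> by_cases a1 : gg v (i+1) y = 0 <;>
    by_cases a2 : gg v (i+2) y = 0 <;> by_cases a3 : gg v (i+3) y = 0 <;>
    by_cases a4 : gg v (i+4) y = 0 <;> simp_all
  · have n0 : y ∉ QI v := fun hh => hy (QI_sub i hh)
    have n1 : ∀ t < 5, y ∉ RE v (i + t) := fun t ht hh => hy (h.RE_sub i t ht hh)
    have n2 : ∀ t, 1 ≤ t → t < 5 → y ≠ v (i + t) := fun t h1 ht hh => hy (hh ▸ h.v_sub i t h1 ht)
    have m0 := n1 0 (by omega)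
    simp only [add_zero] at m0
    unfold ind
    simp [hy, n0, m0, n1 1, n1 2, n1 3, n1 4, n2 1, n2 2, n2 3, n2 4]

end Cfg

section counting
variable {ι : Type} {x : ι → ℝ × ℝ}

open Classical in
lemma cnt_eq_sum (S : Finset ι) (T : Set (ℝ × ℝ)) (p : ℝ × ℝ) (hS : ∀ i, p - x i ∈ T → i ∈ S) :
    cnt x T p = ∑ i ∈ S, ind T (p - x i) := by
  unfold cnt ind
  rw [Finset.sum_boole]
  have : {i | p - x i ∈ T} = ↑(S.filter (fun i => p - x i ∈ T)) := by
    ext i; simp only [Set.mem_ofPred_eq, Finset.coe_filter]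
    exact ⟨fun hh => ⟨hS i hh, hh⟩, fun hh => hh.2⟩
  rw [this, Set.ncard_coe_finset]
  simp

lemma cnt_shift (z w p : ℝ × ℝ) : cnt x {z} (p + w) = cnt x {z - w} p := by
  unfold cnt
  congr 1
  ext i
  simp only [Set.mem_singleton_iff, Set.mem_ofPred_eq]
  constructor
  · intro hh; rw [← hh]; abel
  · intro hh; rw [eq_sub_iff_add_eq] at hh; rw [← hh]; abel

end counting

/-- the tiling data -/
structure Til {ι : Type} (v : ℕ → ℝ × ℝ) (x : ι → ℝ × ℝ) (k : ℕ) : Prop where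
  cfg : Cfg v
  fin : ∀ R : ℝ, {i : ι | ‖x i‖ ≤ R}.Finite
  bdd : ∃ B : ℝ, ∀ y ∈ QQ v, ‖y‖ ≤ B
  cov : ∀ p : ℝ × ℝ, ∃ s : Finset ι, k ≤ s.card ∧ ∀ i ∈ s, p - x i ∈ QQ v
  pack : ∀ p : ℝ × ℝ, ∀ s : Finset ι, (∀ i ∈ s, p - x i ∈ QI v) → s.card ≤ k

namespace Til
variable {ι : Type} {v : ℕ → ℝ × ℝ} {x : ι → ℝ × ℝ} {k : ℕ}

lemma finQ (h : Til v x k) (p : ℝ × ℝ) : {i | p - x i ∈ QQ v}.Finite := by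
  obtain ⟨B, hB⟩ := h.bdd
  refine (h.fin (‖p‖ + B)).subset (fun i hi => ?_)
  have h1 := hB _ hi
  have h2 : ‖x i‖ ≤ ‖p‖ + ‖p - x i‖ := by
    have := norm_sub_le p (p - x i)
    rwa [sub_sub_cancel] at this
  show ‖x i‖ ≤ ‖p‖ + B
  linarith

lemma finT (h : Til v x k) {T : Set (ℝ × ℝ)} (hT : T ⊆ QQ v) (p : ℝ × ℝ) :
    {i | p - x i ∈ T}.Finite := (h.finQ p).subset (fun _ hi => hT hi)

open Filter Topology in
lemma cnt_RR (h : Til v x k) (i : ℕ) (p : ℝ × ℝ) : cnt x (RR v i) p = k := by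
  obtain ⟨B, hB⟩ := h.bdd
  set u := ee v (i + 4) - ee v i with hu
  have hS := h.fin (‖p‖ + ‖u‖ + B)
  set S := {i : ι | ‖x i‖ ≤ ‖p‖ + ‖u‖ + B} with hSdef
  have inS : ∀ (r : ℝ), 0 ≤ r → r ≤ 1 → ∀ j, p + r • u - x j ∈ QQ v → j ∈ S := by
    intro r hr0 hr1 j hj
    have h1 := hB _ hj
    have h2 : ‖x j‖ ≤ ‖p + r • u‖ + ‖p + r • u - x j‖ := by
      have := norm_sub_le (p + r • u) (p + r • u - x j)
      rwa [sub_sub_cancel] at this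
    have h3 : ‖p + r • u‖ ≤ ‖p‖ + ‖u‖ := by
      refine (norm_add_le _ _).trans ?_
      rw [norm_smul, Real.norm_eq_abs, abs_of_nonneg hr0]
      have := mul_le_mul_of_nonneg_right hr1 (norm_nonneg u)
      linarith
    show ‖x j‖ ≤ _
    linarith
  have ev : ∀ᶠ r in 𝓝[>] (0 : ℝ), ∀ j ∈ S,
      (p - x j ∈ RR v i → p - x j + r • u ∈ QI v) ∧
      (p - x j ∉ RR v i → p - x j + r • u ∉ QQ v) := by
    rw [Filter.eventually_all_finite hS]
    intro j _
    exact h.cfg.eventually_dir i (p - x j)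
  have ev1 : ∀ᶠ r in 𝓝[>] (0 : ℝ), r < 1 :=
    nhdsWithin_le_nhds (gt_mem_nhds zero_lt_one)
  have ev0 : ∀ᶠ r in 𝓝[>] (0 : ℝ), 0 < r := eventually_mem_nhdsWithin
  obtain ⟨r, hr, hr1, hr0⟩ := (ev.and (ev1.and ev0)).exists
  have comm : ∀ j, p - x j + r • u = p + r • u - x j := fun j => by abel
  have hfin := h.finT (h.cfg.RR_sub i) p
  apply le_antisymm
  · have : cnt x (RR v i) p = hfin.toFinset.card := by
      unfold cnt; rw [Set.ncard_eq_toFinset_card _ hfin]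
    rw [this]
    apply h.pack (p + r • u)
    intro j hj
    have hj' : p - x j ∈ RR v i := by simpa using hj
    have hjS : j ∈ S := inS 0 le_rfl zero_le_one j (by
      rw [zero_smul, add_zero]; exact h.cfg.RR_sub i hj')
    rw [← comm]
    exact (hr j hjS).1 hj'
  · obtain ⟨s, hs, hs'⟩ := h.cov (p + r • u)
    refine hs.trans ?_
    unfold cnt
    rw [← Set.ncard_coe_finset]
    refine Set.ncard_le_ncard (fun j hj => ?_) hfin
    have hq := hs' j hj
    by_contra hn
    apply (hr j (inS r hr0.le hr1.le j hq)).2 hn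
    rw [comm]; exact hq

lemma QI_sub' (h : Til v x k) : QI v ⊆ QQ v := fun _ hy m => (hy m).le

/-- the main counting identity -/
lemma count (h : Til v x k) (i : ℕ) (p : ℝ × ℝ) : k =
    cnt x (QI v) p + (cnt x (RE v i) p + cnt x (RE v (i+1)) p + cnt x (RE v (i+2)) p
      + cnt x (RE v (i+3)) p + cnt x (RE v (i+4)) p) + (cnt x {v (i+1)} p + cnt x {v (i+2)} p
      + cnt x {v (i+3)} p + cnt x {v (i+4)} p) := by
  rw [← h.cnt_RR i p]
  set S := (h.finQ p).toFinset with hS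
  have key : ∀ T : Set (ℝ × ℝ), T ⊆ RR v i → cnt x T p = ∑ j ∈ S, ind T (p - x j) := by
    intro T hT
    apply cnt_eq_sum
    intro j hj
    rw [hS, Set.Finite.mem_toFinset]
    exact h.cfg.RR_sub i (hT hj)
  have r0 : RE v i ⊆ RR v i := h.cfg.RE_sub i 0 (by omega)
  have vs : ∀ t, 1 ≤ t → t < 5 → ({v (i + t)} : Set (ℝ × ℝ)) ⊆ RR v i := by
    intro t h1 h2
    rw [Set.singleton_subset_iff]; exact h.cfg.v_sub i t h1 h2
  rw [key _ le_rfl, key _ (Cfg.QI_sub i), key _ r0, key _ (h.cfg.RE_sub i 1 (by omega)),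
    key _ (h.cfg.RE_sub i 2 (by omega)), key _ (h.cfg.RE_sub i 3 (by omega)),
    key _ (h.cfg.RE_sub i 4 (by omega)), key _ (vs 1 (by omega) (by omega)),
    key _ (vs 2 (by omega) (by omega)), key _ (vs 3 (by omega) (by omega)),
    key _ (vs 4 (by omega) (by omega))]
  simp only [← Finset.sum_add_distrib]
  exact Finset.sum_congr rfl (fun j _ => h.cfg.ind_RR i _)

/-- pushing along an edge -/
lemma push (h : Til v x k) (j : ℕ) (p : ℝ × ℝ) :
    k ≤ cnt x (QI v) p + cnt x (RE v j) p + cnt x {v (j+1)} p + cnt x (QI v) (p - ee v j) := by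
  rw [← h.cnt_RR j p]
  have fRR := h.finT (h.cfg.RR_sub j) p
  have fQ := h.finT h.QI_sub' p
  have fQ' := h.finT h.QI_sub' (p - ee v j)
  have fE := h.finT ((h.cfg.RE_sub j 0 (by omega)).trans (h.cfg.RR_sub j)) p
  have fv := h.finT (T := {v (j+1)})
    (Set.singleton_subset_iff.2 (h.cfg.RR_sub j (h.cfg.v_sub j 1 (by omega) (by omega)))) p
  unfold cnt
  have sub : {i | p - x i ∈ RR v j} ⊆ (({i | p - x i ∈ QI v} ∪ {i | p - x i ∈ RE v j}) ∪
      {i | p - x i ∈ ({v (j+1)} : Set (ℝ × ℝ))}) ∪ {i | p - ee v j - x i ∈ QI v} := by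
    intro i hi
    rcases h.cfg.chord_step j _ hi with h1 | h1 | h1 | h1
    · left; left; left; exact h1
    · left; left; right; exact h1
    · left; right; exact h1
    · right
      show p - ee v j - x i ∈ QI v
      rwa [show p - ee v j - x i = p - x i - ee v j by abel]
  refine (Set.ncard_le_ncard sub (((fQ.union fE).union fv).union fQ')).trans ?_
  refine (Set.ncard_union_le _ _).trans ?_
  gcongr
  refine (Set.ncard_union_le _ _).trans ?_
  gcongr
  exact Set.ncard_union_le _ _

lemma exists_of_cnt {z p : ℝ × ℝ} (hz : 0 < cnt x {z} p) : ∃ i, p - x i = z := by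
  unfold cnt at hz
  by_contra hn
  push Not at hn
  have : {i | p - x i ∈ ({z} : Set (ℝ × ℝ))} = ∅ := by
    ext i; simpa using hn i
  rw [this] at hz
  simp at hz

lemma two_le (h : Til v x k) {z1 z2 p : ℝ × ℝ} (h12 : z1 ≠ z2) (q1 : z1 ∈ QI v) (q2 : z2 ∈ QI v)
    (c1 : 0 < cnt x {z1} p) (c2 : 0 < cnt x {z2} p) : 2 ≤ cnt x (QI v) p := by
  classical
  obtain ⟨i1, e1⟩ := exists_of_cnt c1
  obtain ⟨i2, e2⟩ := exists_of_cnt c2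
  have n12 : i1 ≠ i2 := by rintro rfl; exact h12 (e1.symm.trans e2)
  rw [← Finset.card_pair n12, ← Set.ncard_coe_finset]
  refine Set.ncard_le_ncard (fun j hj => ?_) (h.finT h.QI_sub' p)
  simp only [Finset.coe_insert, Finset.coe_singleton, Set.mem_insert_iff,
    Set.mem_singleton_iff] at hj
  show p - x j ∈ QI v
  rcases hj with rfl | rfl
  · rwa [e1]
  · rwa [e2]

lemma three_le (h : Til v x k) {z1 z2 z3 p : ℝ × ℝ} (h12 : z1 ≠ z2) (h13 : z1 ≠ z3) (h23 : z2 ≠ z3)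
    (q1 : z1 ∈ QI v) (q2 : z2 ∈ QI v) (q3 : z3 ∈ QI v)
    (c1 : 0 < cnt x {z1} p) (c2 : 0 < cnt x {z2} p) (c3 : 0 < cnt x {z3} p) :
    3 ≤ cnt x (QI v) p := by
  classical
  obtain ⟨i1, e1⟩ := exists_of_cnt c1
  obtain ⟨i2, e2⟩ := exists_of_cnt c2
  obtain ⟨i3, e3⟩ := exists_of_cnt c3
  have n12 : i1 ≠ i2 := by rintro rfl; exact h12 (e1.symm.trans e2)
  have n13 : i1 ≠ i3 := by rintro rfl; exact h13 (e1.symm.trans e3)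
  have n23 : i2 ≠ i3 := by rintro rfl; exact h23 (e2.symm.trans e3)
  have hc : ({i1, i2, i3} : Finset ι).card = 3 := Finset.card_eq_three.2 ⟨_, _, _, n12, n13, n23, rfl⟩
  rw [← hc, ← Set.ncard_coe_finset]
  refine Set.ncard_le_ncard (fun j hj => ?_) (h.finT h.QI_sub' p)
  simp only [Finset.coe_insert, Finset.coe_singleton, Set.mem_insert_iff,
    Set.mem_singleton_iff] at hj
  show p - x j ∈ QI v
  rcases hj with rfl | rfl | rfl
  · rwa [e1]
  · rwa [e2]
  · rwa [e3]

end Til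

/-- data extracted from a polygon: `v` lists vertices cyclically about the centre. -/
structure Pre (v : ℕ → ℝ × ℝ) : Prop where
  anti : ∀ j, v (j + 5) = - v j
  ord : ∀ j t, 0 < t → t < 5 → 0 < cr (v j) (v (j + t))
  tri : ∀ j s t, 0 < s → s < t → t < 5 →
    0 < cr (v j) (v (j + s)) + cr (v (j + s)) (v (j + t)) - cr (v j) (v (j + t))

namespace Pre
variable {v : ℕ → ℝ × ℝ}

lemma v10 (h : Pre v) (j : ℕ) : v (j + 10) = v j := by
  rw [show j + 10 = j + 5 + 5 by ring, h.anti, h.anti, neg_neg]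

/-- `e_j` against `v_{j+t} - v_j` -/
lemma side (h : Pre v) (j t : ℕ) (h2 : 2 ≤ t) (h9 : t ≤ 9) :
    0 < cr (ee v j) (v (j + t) - v j) := by
  have o := h.ord j 1 (by norm_num) (by norm_num)
  have key : cr (ee v j) (v (j + t) - v j)
      = cr (v j) (v (j + 1)) + cr (v (j + 1)) (v (j + t)) - cr (v j) (v (j + t)) := by
    simp [cr, ee]; ring
  rw [key]
  by_cases h4 : t ≤ 4
  · exact h.tri j 1 t (by norm_num) (by omega) (by omega)
  · by_cases h6 : t ≤ 6
    · have : t = 5 ∨ t = 6 := by omega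
      rcases this with rfl | rfl
      · rw [h.anti]
        have : cr (v (j+1)) (-v j) = cr (v j) (v (j+1)) := by simp [cr]; ring
        have : cr (v j) (-v j) = 0 := by simp [cr]; ring
        linarith
      · rw [show j + 6 = j + 1 + 5 by ring, h.anti]
        have : cr (v (j+1)) (-v (j+1)) = 0 := by simp [cr]; ring
        have : cr (v j) (-v (j+1)) = - cr (v j) (v (j+1)) := by simp [cr]; ring
        linarith
    · obtain ⟨r, rfl⟩ : ∃ r, t = r + 5 := ⟨t - 5, by omega⟩
      have q := h.tri (j + r + 5) (5 - r) (6 - r) (by omega) (by omega) (by omega)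
      rw [show j + r + 5 + (5 - r) = j + 10 by omega, show j + r + 5 + (6 - r) = j + 1 + 10 by omega,
        h.v10, h.v10] at q
      rw [← add_assoc]
      have a1 := cr_anti (v (j + 1)) (v (j + r + 5))
      have a2 := cr_anti (v j) (v (j + r + 5))
      linarith

lemma e1 (h : Pre v) (j : ℕ) : 0 < cr (ee v j) (ee v (j + 1)) := by
  have := h.side j 2 (by norm_num) (by norm_num)
  have e : cr (ee v j) (ee v (j + 1)) = cr (ee v j) (v (j + 2) - v j) := by
    simp [cr, ee, add_assoc]; ring
  rwa [e]

/-- `e_{j}` against `v_{l} - v_{j+1}` -/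
lemma side' (h : Pre v) (j t : ℕ) (h2 : 2 ≤ t) (h9 : t ≤ 9) :
    0 < cr (ee v j) (v (j + t) - v (j + 1)) := by
  have := h.side j t h2 h9
  have e : cr (ee v j) (v (j + t) - v (j + 1)) = cr (ee v j) (v (j + t) - v j) := by
    simp [cr, ee]; ring
  rwa [e]

lemma hexp (h : Pre v) (j : ℕ) : cr (ee v j) (v (j + 5)) = cr (v j) (v (j + 1)) := by
  rw [h.anti]; simp [cr, ee]; ring

/-- convexity: `g_j` at all vertices -/
lemma e4 (h : Pre v) (j : ℕ) : 0 < cr (ee v j) (ee v (j + 4)) := by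
  have q := h.side j 9 (by norm_num) (by norm_num)
  have e : cr (ee v j) (ee v (j + 4)) = cr (ee v j) (v (j + 9) - v j) := by
    unfold ee
    rw [show j + 4 + 1 = j + 5 by ring, h.anti, show j + 9 = j + 4 + 5 by ring, h.anti]
    simp [cr]; ring
  rwa [e]

/-- positivity of `e_j × (v_{j+5} - v_{j+s})`, `s = 1..4` -/
lemma top (h : Pre v) (j s : ℕ) (h1 : 1 ≤ s) (h4 : s ≤ 4) :
    0 < cr (ee v j) (v (j + 5) - v (j + s)) := by
  have q := h.side j (s + 5) (by omega) (by omega)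
  have e : cr (ee v j) (v (j + 5) - v (j + s)) = cr (ee v j) (v (j + (s + 5)) - v j) := by
    rw [h.anti, ← add_assoc, h.anti]
    congr 1; abel
  rwa [e]

lemma e2 (h : Pre v) (j : ℕ) : 0 < cr (ee v j) (ee v (j + 2)) := by
  have a := h.e1 j
  have b := h.e1 (j + 1)
  have w0 := h.top j 2 (by norm_num) (by norm_num)
  have w1 := h.side' (j + 1) 4 (by norm_num) (by norm_num)
  have w2 := h.side (j + 2) 3 (by norm_num) (by norm_num)
  simp only [add_assoc, Nat.reduceAdd] at *
  have p := plucker (ee v j) (ee v (j + 1)) (ee v (j + 2)) (v (j + 5) - v (j + 2))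
  have : 0 < cr (ee v j) (ee v (j + 2)) * cr (ee v (j + 1)) (v (j + 5) - v (j + 2)) := by
    rw [p]; positivity
  exact pos_of_mul_pos_left this w1.le

lemma e3 (h : Pre v) (j : ℕ) : 0 < cr (ee v j) (ee v (j + 3)) := by
  have a := h.e2 j
  have b := h.e1 (j + 2)
  have w0 := h.top j 3 (by norm_num) (by norm_num)
  have w1 := h.side' (j + 2) 3 (by norm_num) (by norm_num)
  have w2 := h.side (j + 3) 2 (by norm_num) (by norm_num)
  simp only [add_assoc, Nat.reduceAdd] at *
  have p := plucker (ee v j) (ee v (j + 2)) (ee v (j + 3)) (v (j + 5) - v (j + 3))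
  have : 0 < cr (ee v j) (ee v (j + 3)) * cr (ee v (j + 2)) (v (j + 5) - v (j + 3)) := by
    rw [p]; positivity
  exact pos_of_mul_pos_left this w1.le

lemma cfg (h : Pre v) : Cfg v where
  anti := h.anti
  pos := by
    intro j t h0 h5
    interval_cases t
    · exact h.e1 j
    · exact h.e2 j
    · exact h.e3 j
    · exact h.e4 j

lemma Q_conv : Convex ℝ (QQ v) := by
  intro a ha b hb s t hs ht hst m
  have e : gg v m (s • a + t • b) = s * gg v m a + t * gg v m b := by
    have : t = 1 - s := by linarith
    subst this
    unfold gg; simp [cr]; ring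
  rw [e]
  exact add_nonneg (mul_nonneg hs (ha m)) (mul_nonneg ht (hb m))

lemma v_mem (h : Cfg v) (j : ℕ) : v j ∈ QQ v := by
  have := h.RR_sub (j + 9) (h.v_sub (j + 9) 1 (by omega) (by omega))
  rwa [show j + 9 + 1 = j + 10 by ring, h.v10] at this

/-- sector argument -/
lemma sector (h : Pre v) (y : ℝ × ℝ) (hy : y ∈ QQ v) :
    ∃ (i : ℕ) (a b : ℝ), 0 ≤ a ∧ 0 ≤ b ∧ a + b ≤ 1 ∧ y = a • v i + b • v (i + 1) := by
  have ex : ∃ i, 0 ≤ cr (v i) y ∧ cr (v (i + 1)) y ≤ 0 := by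
    by_contra hc
    push Not at hc
    have s5 : ∀ j, cr (v (j + 5)) y = - cr (v j) y := fun j => by rw [h.anti, cr_neg_left]
    have base : ∃ j, 0 ≤ cr (v j) y := by
      by_cases c : 0 ≤ cr (v 0) y
      · exact ⟨0, c⟩
      · refine ⟨0 + 5, ?_⟩
        rw [s5]; linarith
    obtain ⟨j, hj⟩ := base
    have a1 := hc j hj
    have a2 := hc (j+1) a1.le
    have a3 := hc (j+1+1) a2.le
    have a4 := hc (j+1+1+1) a3.le
    have a5 := hc (j+1+1+1+1) a4.le
    have := s5 j
    simp only [add_assoc, Nat.reduceAdd] at a5 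
    linarith
  obtain ⟨i, h0, h1⟩ := ex
  have d : 0 < cr (v i) (v (i + 1)) := h.ord i 1 (by norm_num) (by norm_num)
  have g := hy i
  refine ⟨i, - cr (v (i + 1)) y / cr (v i) (v (i + 1)), cr (v i) y / cr (v i) (v (i + 1)),
    div_nonneg (by linarith) d.le, div_nonneg h0 d.le, ?_, ?_⟩
  · rw [← add_div, div_le_one d]
    have : gg v i y = cr (v (i + 1)) y - cr (v i) y + cr (v i) (v (i + 1)) := by
      unfold gg hh ee; rw [cr_sub_left]
    linarith
  · have hne := d.ne'
    apply Prod.ext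
    · simp only [Prod.fst_add, Prod.smul_fst, smul_eq_mul]
      field_simp
      simp only [cr]; ring
    · simp only [Prod.snd_add, Prod.smul_snd, smul_eq_mul]
      field_simp
      simp only [cr]; ring

lemma Q_eq (h : Pre v) : QQ v = convexHull ℝ (Set.range v) := by
  apply Set.Subset.antisymm
  · intro y hy
    obtain ⟨i, a, b, ha, hb, hab, rfl⟩ := h.sector y hy
    have c := convex_convexHull ℝ (Set.range v)
    have m : ∀ j, v j ∈ convexHull ℝ (Set.range v) := fun j => subset_convexHull _ _ ⟨j, rfl⟩
    have z : (0 : ℝ × ℝ) ∈ convexHull ℝ (Set.range v) := by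
      have := c (m 0) (m (0 + 5)) (show (0:ℝ) ≤ 1/2 by norm_num) (show (0:ℝ) ≤ 1/2 by norm_num)
        (by norm_num)
      rw [h.anti] at this
      simpa using this
    have := c.sum_mem (t := (Finset.univ : Finset (Fin 3))) (w := ![a, b, 1 - a - b])
      (z := ![v i, v (i+1), 0]) ?_ ?_ ?_
    · simpa [Fin.sum_univ_three] using this
    · intro t _; fin_cases t <;> simp <;> linarith
    · simp [Fin.sum_univ_three]
    · intro t _; fin_cases t <;> simp [m, z]
  · exact convexHull_min (by rintro _ ⟨j, rfl⟩; exact v_mem h.cfg j) Q_conv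

lemma gg_cont (m : ℕ) : Continuous (gg v m) := by
  unfold gg cr; fun_prop

lemma QI_open (h : Cfg v) : IsOpen (QI v) := by
  have : QI v = ⋂ m ∈ Finset.range 10, {y | 0 < gg v m y} := by
    ext y
    simp only [QI, Set.mem_ofPred_eq, Set.mem_iInter, Finset.mem_range]
    constructor
    · intro hy m _; exact hy m
    · intro hy m; rw [h.g_mod]; exact hy _ (Nat.mod_lt _ (by norm_num))
  rw [this]
  exact isOpen_biInter_finset fun m _ => isOpen_lt continuous_const (gg_cont m)

lemma QI_int (h : Cfg v) : QI v ⊆ interior (QQ v) :=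
  interior_maximal (fun _ hy m => (hy m).le) (QI_open h)

end Pre

lemma ar_zero {k f a0 a1 a2 a3 a4 a5 a6 a7 a8 a9 N : ℕ}
    (e : 2 * k = 2 * f + (a0 + a1 + a2 + a3 + a4 + a5 + a6 + a7 + a8 + a9) + 4 * N)
    (hk : k = f + 2 * N) : a0 = 0 ∧ a1 = 0 ∧ a2 = 0 ∧ a3 = 0 ∧ a4 = 0 ∧ a5 = 0 ∧ a6 = 0 ∧
      a7 = 0 ∧ a8 = 0 ∧ a9 = 0 := by
  have : a0 + a1 + a2 + a3 + a4 + a5 + a6 + a7 + a8 + a9 = 0 := by linarith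
  simpa [and_assoc] using this

lemma ar_le {k f a0 a1 a2 a3 a4 a5 a6 a7 a8 a9 N : ℕ}
    (e : 2 * k = 2 * f + (a0 + a1 + a2 + a3 + a4 + a5 + a6 + a7 + a8 + a9) + 4 * N) :
    f + 2 * N ≤ k := by
  generalize a0 + a1 + a2 + a3 + a4 + a5 + a6 + a7 + a8 + a9 = S at e
  omega

lemma ar_mult {k f A5 F n0 n5 n6 m0 m1 m5 m6 A0 : ℕ} (hk : k ≤ 4) (h1 : 1 ≤ n0)
    (l1 : f + 2 * (n0 + n5) ≤ k) (l2 : F + 2 * (m0 + m5) ≤ k)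
    (z : k = f + 2 * (n0 + n5) → A0 = 0 ∧ A5 = 0)
    (e1 : A0 + n0 = A5 + n6) (e2 : m1 + m6 = m0 + m5)
    (s1 : m1 = n0) (s3 : k ≤ f + A5 + n6 + F) : n0 + n5 ≤ 1 := by
  by_contra hc
  obtain ⟨z1, z2⟩ := z (by omega)
  omega

lemma ar_good {n0 n5 n6 m0 m1 m2 m3 m4 m5 m6 m7 m8 m9 : ℕ} 
    (h1 : 1 ≤ n0) (h2 : n0 + n5 ≤ 1) (h3 : m0 + m5 ≤ 1) (e0 : n0 = n6)
    (s1 : m1 = n0) (s2 : m5 = n6)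
    (d4 : m4 + m9 = m0 + m5) (b3 : m3 = m9) (b4 : m4 = m0) : 0 < m3 := by
  omega

lemma ar_pair {a b : ℕ} (h : a = 0 → b = 0 → False) : 1 ≤ a + b := by
  by_contra hc
  exact h (by omega) (by omega)

lemma ar_quad {a b c d : ℕ} (h : a = 0 → b = 0 → c = 0 → d = 0 → False) :
    1 ≤ (a + b) + (c + d) := by
  by_contra hc
  exact h (by omega) (by omega) (by omega) (by omega)

lemma ar_five {k f a0 a1 a2 a3 a4 a5 a6 a7 a8 a9 N : ℕ} (hk : k ≤ 4) (hN : N = 1)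
    (e : 2 * k = 2 * f + (a0 + a1 + a2 + a3 + a4 + a5 + a6 + a7 + a8 + a9) + 4 * N)
    (g0 : 1 ≤ a0 + a5) (g1 : 1 ≤ a1 + a6) (g2 : 1 ≤ a2 + a7) (g3 : 1 ≤ a3 + a8)
    (g4 : 1 ≤ a4 + a9) : False := by
  subst hN
  linarith

lemma ar_cycle {k f a0 a1 a2 a3 a4 a5 a6 a7 a8 a9 N : ℕ} (hk : k ≤ 4) (hN : N = 1) (hf : 1 ≤ f)
    (e : 2 * k = 2 * f + (a0 + a1 + a2 + a3 + a4 + a5 + a6 + a7 + a8 + a9) + 4 * N)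
    (g0 : 1 ≤ (a0 + a5) + (a1 + a6)) (g1 : 1 ≤ (a1 + a6) + (a2 + a7))
    (g2 : 1 ≤ (a2 + a7) + (a3 + a8)) (g3 : 1 ≤ (a3 + a8) + (a4 + a9))
    (g4 : 1 ≤ (a4 + a9) + (a5 + a0)) : False := by
  subst hN
  rw [add_comm a5 a0] at g4
  have e' : 2 * k = 2 * f + ((a0 + a5) + (a1 + a6) + (a2 + a7) + (a3 + a8) + (a4 + a9)) + 4 * 1 := by
    rw [e]; ring
  clear e
  generalize a0 + a5 = b0 at *
  generalize a1 + a6 = b1 at *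
  generalize a2 + a7 = b2 at *
  generalize a3 + a8 = b3 at *
  generalize a4 + a9 = b4 at *
  omega

namespace Til
variable {ι : Type} {v : ℕ → ℝ × ℝ} {x : ι → ℝ × ℝ} {k : ℕ}

lemma RE10 (h : Cfg v) (j : ℕ) : RE v (j + 10) = RE v j := by
  unfold RE
  ext y
  simp only [Set.mem_ofPred_eq, h.g10, show ∀ t, j + 10 + t = j + t + 10 from fun t => by ring]

/-- all ten counting identities at `p` with base `i`. -/
lemma eqs0 (h : Til v x k) (i : ℕ) (p : ℝ × ℝ) (f : ℕ) (A n : ℕ → ℕ)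
    (hf : f = cnt x (QI v) p) (hA : ∀ t, A t = cnt x (RE v (i + t)) p)
    (hn : ∀ t, n t = cnt x {v (i + t)} p) :
    k = f + (A 0 + A 1 + A 2 + A 3 + A 4) + (n 1 + n 2 + n 3 + n 4) ∧
    k = f + (A 1 + A 2 + A 3 + A 4 + A 5) + (n 2 + n 3 + n 4 + n 5) ∧
    k = f + (A 2 + A 3 + A 4 + A 5 + A 6) + (n 3 + n 4 + n 5 + n 6) ∧
    k = f + (A 3 + A 4 + A 5 + A 6 + A 7) + (n 4 + n 5 + n 6 + n 7) ∧
    k = f + (A 4 + A 5 + A 6 + A 7 + A 8) + (n 5 + n 6 + n 7 + n 8) ∧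
    k = f + (A 5 + A 6 + A 7 + A 8 + A 9) + (n 6 + n 7 + n 8 + n 9) ∧
    k = f + (A 6 + A 7 + A 8 + A 9 + A 0) + (n 7 + n 8 + n 9 + n 0) ∧
    k = f + (A 7 + A 8 + A 9 + A 0 + A 1) + (n 8 + n 9 + n 0 + n 1) ∧
    k = f + (A 8 + A 9 + A 0 + A 1 + A 2) + (n 9 + n 0 + n 1 + n 2) ∧
    k = f + (A 9 + A 0 + A 1 + A 2 + A 3) + (n 0 + n 1 + n 2 + n 3) := by
  have key : ∀ r, k = f + (A r + A (r+1) + A (r+2) + A (r+3) + A (r+4))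
      + (n (r+1) + n (r+2) + n (r+3) + n (r+4)) := by
    intro r
    have := h.count (i + r) p
    simp only [hf, hA, hn]
    simpa only [add_assoc] using this
  have A10 : ∀ t, A (t + 10) = A t := by
    intro t; rw [hA, hA, ← add_assoc, RE10 h.cfg]
  have n10 : ∀ t, n (t + 10) = n t := by
    intro t; rw [hn, hn, ← add_assoc, h.cfg.v10]
  have a0 := A10 0
  have a1 := A10 1
  have a2 := A10 2
  have a3 := A10 3
  have n0 := n10 0
  have n1 := n10 1
  have n2 := n10 2
  have n3 := n10 3
  have k0 := key 0
  have k1 := key 1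
  have k2 := key 2
  have k3 := key 3
  have k4 := key 4
  have k5 := key 5
  have k6 := key 6
  have k7 := key 7
  have k8 := key 8
  have k9 := key 9
  simp only [Nat.reduceAdd] at *
  simp only [a0, a1, a2, a3, n0, n1, n2, n3] at *
  exact ⟨k0, k1, k2, k3, k4, k5, k6, k7, k8, k9⟩


/-- reduced form of the ten counting identities -/
lemma eqs (h : Til v x k) (i : ℕ) (p : ℝ × ℝ) (f : ℕ) (A n : ℕ → ℕ)
    (hf : f = cnt x (QI v) p) (hA : ∀ t, A t = cnt x (RE v (i + t)) p)
    (hn : ∀ t, n t = cnt x {v (i + t)} p) :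
    n 1 + n 6 = n 0 + n 5 ∧ n 2 + n 7 = n 0 + n 5 ∧ n 3 + n 8 = n 0 + n 5 ∧
    n 4 + n 9 = n 0 + n 5 ∧
    A 0 + n 0 = A 5 + n 6 ∧ A 1 + n 1 = A 6 + n 7 ∧ A 2 + n 2 = A 7 + n 8 ∧
    A 3 + n 3 = A 8 + n 9 ∧ A 4 + n 4 = A 9 + n 0 ∧
    2 * k = 2 * f + (A 0 + A 1 + A 2 + A 3 + A 4 + A 5 + A 6 + A 7 + A 8 + A 9)
      + 4 * (n 0 + n 5) := by
  obtain ⟨k0, k1, k2, k3, k4, k5, k6, k7, k8, k9⟩ := h.eqs0 i p f A n hf hA hn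
  clear hf hA hn
  refine ⟨?_, ?_, ?_, ?_, ?_, ?_, ?_, ?_, ?_, ?_⟩ <;> linarith

attribute [irreducible] cnt RE QI

/-- relations between `p` and the neighbour `p + e_i` -/
lemma step (h : Til v x k) (i : ℕ) (p : ℝ × ℝ) :
    cnt x {v (i + 1)} (p + ee v i) = cnt x {v (i + 0)} p ∧
    cnt x {v (i + 5)} (p + ee v i) = cnt x {v (i + 6)} p ∧
    k ≤ cnt x (QI v) p + cnt x (RE v (i + 5)) p + cnt x {v (i + 6)} p
      + cnt x (QI v) (p + ee v i) := by
  refine ⟨?_, ?_, ?_⟩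
  · rw [cnt_shift]; congr 2; unfold ee; simp
  · rw [cnt_shift]; congr 2
    rw [h.cfg.anti, show i + 6 = i + 1 + 5 by ring, h.cfg.anti]; unfold ee; abel
  · have := h.push (i + 5) p
    rwa [h.cfg.eanti, sub_neg_eq_add] at this

lemma le_k (h : Til v x k) (i : ℕ) (p : ℝ × ℝ) :
    cnt x (QI v) p + 2 * (cnt x {v i} p + cnt x {v (i + 5)} p) ≤ k := by
  obtain ⟨-, -, -, -, -, -, -, -, -, e⟩ := h.eqs i p _ _ _ rfl (fun _ => rfl) (fun _ => rfl)
  exact ar_le e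

lemma eq_k (h : Til v x k) (i : ℕ) (p : ℝ × ℝ)
    (hk : k = cnt x (QI v) p + 2 * (cnt x {v i} p + cnt x {v (i + 5)} p)) :
    cnt x (RE v i) p = 0 ∧ cnt x (RE v (i + 1)) p = 0 ∧ cnt x (RE v (i + 2)) p = 0 ∧
    cnt x (RE v (i + 3)) p = 0 ∧ cnt x (RE v (i + 4)) p = 0 ∧ cnt x (RE v (i + 5)) p = 0 ∧
    cnt x (RE v (i + 6)) p = 0 ∧ cnt x (RE v (i + 7)) p = 0 ∧ cnt x (RE v (i + 8)) p = 0 ∧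
    cnt x (RE v (i + 9)) p = 0 := by
  obtain ⟨-, -, -, -, -, -, -, -, -, e⟩ := h.eqs i p _ _ _ rfl (fun _ => rfl) (fun _ => rfl)
  exact ar_zero e hk

lemma mult_aux (h : Til v x k) (hk : k ≤ 4) (i : ℕ) (p : ℝ × ℝ) (h1 : 1 ≤ cnt x {v i} p) :
    cnt x {v i} p + cnt x {v (i + 5)} p ≤ 1 := by
  obtain ⟨-, -, -, -, e0, -⟩ := h.eqs i p _ _ _ rfl (fun _ => rfl) (fun _ => rfl)
  obtain ⟨d1, -⟩ := h.eqs i (p + ee v i) _ _ _ rfl (fun _ => rfl) (fun _ => rfl)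
  obtain ⟨s1, s2, s3⟩ := h.step i p
  exact ar_mult hk h1 (h.le_k i p) (h.le_k i (p + ee v i))
    (fun hq => ⟨(h.eq_k i p hq).1, (h.eq_k i p hq).2.2.2.2.2.1⟩) e0 d1 s1 s3

lemma mult (h : Til v x k) (hk : k ≤ 4) (i : ℕ) (p : ℝ × ℝ) :
    cnt x {v i} p + cnt x {v (i + 5)} p ≤ 1 := by
  by_cases h1 : 1 ≤ cnt x {v i} p
  · exact h.mult_aux hk i p h1
  · by_cases h2 : 1 ≤ cnt x {v (i + 5)} p
    · have := h.mult_aux hk (i + 5) p h2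
      rw [show i + 5 + 5 = i + 10 by ring, h.cfg.v10] at this
      omega
    · omega

/-- consequences of a good half edge -/
lemma good (h : Til v x k) (hk : k ≤ 4) (i : ℕ) (p : ℝ × ℝ) (h1 : 1 ≤ cnt x {v i} p)
    (hA : cnt x (RE v i) p = 0) (hA5 : cnt x (RE v (i + 5)) p = 0) :
    k ≤ cnt x (QI v) p + 1 + cnt x (QI v) (p + ee v i) ∧ cnt x (QI v) (p + ee v i) + 2 ≤ k ∧
    (cnt x (QI v) (p + ee v i) + 2 = k → 0 < cnt x {v (i + 3) - ee v i} p) := by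
  obtain ⟨-, -, -, -, e0, -⟩ := h.eqs i p _ _ _ rfl (fun _ => rfl) (fun _ => rfl)
  obtain ⟨d1, -, -, d4, -, -, -, b3, b4, -⟩ :=
    h.eqs i (p + ee v i) _ _ _ rfl (fun _ => rfl) (fun _ => rfl)
  obtain ⟨s1, s2, s3⟩ := h.step i p
  have m := h.mult hk i p
  have m' := h.mult hk i (p + ee v i)
  have l := h.le_k i (p + ee v i)
  rw [← cnt_shift]
  simp only [add_zero] at e0 d1 d4 b3 b4 s1
  rw [hA, hA5, zero_add, zero_add] at e0
  rw [hA5] at s3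
  refine ⟨by omega, by omega, fun hq => ?_⟩
  obtain ⟨-, -, -, z3, z4, -, -, -, z8, z9⟩ := h.eq_k i (p + ee v i) (by omega)
  rw [z3, z8, zero_add, zero_add] at b3
  rw [z4, z9, zero_add, zero_add] at b4
  exact ar_good (m2 := 0) (m6 := 0) (m7 := 0) (m8 := 0) h1 m m' e0 s1 s2 d4 b3 b4

/-- two consecutive good half edges at a point on an open edge are impossible -/
lemma two_good (h : Til v x k) (hk : k ≤ 4) (i : ℕ) (p : ℝ × ℝ) (h1 : 1 ≤ cnt x {v i} p)
    (hA : cnt x (RE v i) p = 0) (hA5 : cnt x (RE v (i + 5)) p = 0)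
    (hA1 : cnt x (RE v (i + 1)) p = 0) (hA6 : cnt x (RE v (i + 6)) p = 0)
    (hf : cnt x (QI v) p + 2 < k) : False := by
  have E := h.eqs i p _ _ _ rfl (fun _ => rfl) (fun _ => rfl)
  simp only [add_zero] at E
  have m := h.mult hk i p
  have h6 : 1 ≤ cnt x {v (i + 6)} p := by omega
  obtain ⟨a1, a2, a3⟩ := h.good hk i p h1 hA hA5
  have hA11 : cnt x (RE v (i + 6 + 5)) p = 0 := by
    rw [show i + 6 + 5 = i + 1 + 10 by ring, RE10 h.cfg]; exact hA1
  obtain ⟨b1, b2, b3⟩ := h.good hk (i + 6) p h6 hA6 hA11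
  have c1 := a3 (by omega)
  have c2 := b3 (by omega)
  have q1 := h.cfg.z_mem i
  have q2 := h.cfg.z_mem (i + 6)
  have ne := h.cfg.z_ne i
  have := h.two_le ne q1 q2 c1 c2
  omega

lemma one_good_dir (h : Til v x k) (hk : k ≤ 4) (i : ℕ) (p : ℝ × ℝ)
    (h1 : cnt x {v i} p + cnt x {v (i+5)} p = 1)
    (hA : cnt x (RE v i) p = 0) (hA5 : cnt x (RE v (i + 5)) p = 0)
    (hf : cnt x (QI v) p + 2 < k) : 1 ≤ cnt x (QI v) p := by
  by_cases c : 1 ≤ cnt x {v i} p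
  · have := h.good hk i p c hA hA5
    omega
  · have hA10 : cnt x (RE v (i + 5 + 5)) p = 0 := by
      rw [show i + 5 + 5 = i + 10 by ring, RE10 h.cfg]; exact hA
    have := h.good hk (i + 5) p (by omega) hA5 hA10
    omega

lemma two_good_dir (h : Til v x k) (hk : k ≤ 4) (i : ℕ) (p : ℝ × ℝ)
    (h1 : cnt x {v i} p + cnt x {v (i+5)} p = 1)
    (hA : cnt x (RE v i) p = 0) (hA5 : cnt x (RE v (i + 5)) p = 0)
    (hA1 : cnt x (RE v (i + 1)) p = 0) (hA6 : cnt x (RE v (i + 6)) p = 0)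
    (hf : cnt x (QI v) p + 2 < k) : False := by
  by_cases c : 1 ≤ cnt x {v i} p
  · exact h.two_good hk i p c hA hA5 hA1 hA6 hf
  · have hA10 : cnt x (RE v (i + 5 + 5)) p = 0 := by
      rw [show i + 5 + 5 = i + 10 by ring, RE10 h.cfg]; exact hA
    have hA11 : cnt x (RE v (i + 5 + 6)) p = 0 := by
      rw [show i + 5 + 6 = i + 1 + 10 by ring, RE10 h.cfg]; exact hA1
    exact h.two_good hk (i + 5) p (by omega) hA5 hA10 (by rwa [show i + 5 + 1 = i + 6 by ring])
      hA11 hf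

/-- there are no vertices on open edges -/
lemma no_edge (h : Til v x k) (hk : k ≤ 4) (i : ℕ) (p : ℝ × ℝ) (h1 : 1 ≤ cnt x {v i} p) :
    cnt x (QI v) p + 2 = k := by
  obtain ⟨q1, q2, q3, q4, -, -, -, -, -, e⟩ := h.eqs i p _ _ _ rfl (fun _ => rfl) (fun _ => rfl)
  simp only [add_zero] at q1 q2 q3 q4 e
  have m := h.mult hk i p
  have l := h.le_k i p
  by_contra hne
  have d0 : cnt x {v i} p + cnt x {v (i+5)} p = 1 := le_antisymm m (h1.trans (Nat.le_add_right _ _))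
  have hf : cnt x (QI v) p + 2 < k := by
    rw [d0] at l
    exact lt_of_le_of_ne l hne
  rw [d0] at q1 q2 q3 q4
  have f1 : 1 ≤ cnt x (QI v) p := by
    have o0 := h.one_good_dir hk i p d0
    have o1 := h.one_good_dir hk (i+1) p q1
    have o2 := h.one_good_dir hk (i+2) p q2
    have o3 := h.one_good_dir hk (i+3) p q3
    have o4 := h.one_good_dir hk (i+4) p q4
    simp only [add_assoc, Nat.reduceAdd] at o1 o2 o3 o4
    by_contra hlt
    exact ar_five hk d0 e (ar_pair fun a b => hlt (o0 a b hf)) (ar_pair fun a b => hlt (o1 a b hf))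
      (ar_pair fun a b => hlt (o2 a b hf)) (ar_pair fun a b => hlt (o3 a b hf))
      (ar_pair fun a b => hlt (o4 a b hf))
  have o0 := h.two_good_dir hk i p d0
  have o1 := h.two_good_dir hk (i+1) p q1
  have o2 := h.two_good_dir hk (i+2) p q2
  have o3 := h.two_good_dir hk (i+3) p q3
  have o4 := h.two_good_dir hk (i+4) p q4
  have r2 : RE v (i + 10) = RE v i := RE10 h.cfg i
  simp only [add_assoc, Nat.reduceAdd, r2] at o1 o2 o3 o4
  exact ar_cycle hk d0 f1 e (ar_quad fun a b c d => o0 a b c d hf)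
    (ar_quad fun a b c d => o1 a b c d hf) (ar_quad fun a b c d => o2 a b c d hf)
    (ar_quad fun a b c d => o3 a b c d hf) (ar_quad fun a b c d => o4 a b c d hf)

theorem main (h : Til v x k) (i0 : ι) : 5 ≤ k := by
  by_contra hlt
  have hk : k ≤ 4 := by omega
  have hone : 1 ≤ cnt x {v 0} (x i0 + v 0) := by
    have hf : {i | x i0 + v 0 - x i ∈ ({v 0} : Set (ℝ × ℝ))}.Finite :=
      h.finT (Set.singleton_subset_iff.2 (by
        have := h.cfg.RR_sub 9 (h.cfg.v_sub 9 1 (by omega) (by omega))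
        rwa [show 9 + 1 = 0 + 10 by rfl, h.cfg.v10] at this)) _
    have : 0 < Set.ncard {i | x i0 + v 0 - x i ∈ ({v 0} : Set (ℝ × ℝ))} := by
      rw [Set.ncard_pos hf]
      exact ⟨i0, by simp⟩
    unfold cnt; exact this
  generalize x i0 + v 0 = p at hone
  have hf := h.no_edge hk 0 p hone
  obtain ⟨q1, q2, q3, q4, w0, w1, w2, w3, w4, -⟩ :=
    h.eqs 0 p _ _ _ rfl (fun _ => rfl) (fun _ => rfl)
  have m := h.mult hk 0 p
  have z := h.eq_k 0 p (by omega)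
  simp only [zero_add] at q1 q2 q3 q4 w0 w1 w2 w3 w4 m z
  obtain ⟨z0, z1, z2, z3, z4, z5, z6, z7, z8, z9⟩ := z
  simp only [z0, z1, z2, z3, z4, z5, z6, z7, z8, z9, zero_add] at w0 w1 w2 w3 w4
  have A0 : ∀ j < 10, cnt x (RE v j) p = 0 := by
    intro j hj
    interval_cases j <;> assumption
  have T : ∀ i < 10, cnt x {v i} p = 1 → 0 < cnt x {v (i + 3) - ee v i} p := by
    intro i hi hn
    have z0 := A0 i hi
    have z5 : cnt x (RE v (i + 5)) p = 0 := by
      by_cases hi5 : i < 5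
      · exact A0 _ (by omega)
      · have := A0 (i - 5) (by omega)
        rwa [← RE10 h.cfg, show i - 5 + 10 = i + 5 by omega] at this
    apply (h.good hk i p (by omega) z0 z5).2.2
    apply h.no_edge hk (i + 1)
    rw [(h.step i p).1, add_zero]; omega
  have t0 := T 0 (by omega) (by omega)
  have t6 := T 6 (by omega) (by omega)
  have t2 := T 2 (by omega) (by omega)
  have t8 := T 8 (by omega) (by omega)
  have t4 := T 4 (by omega) (by omega)
  have q0 := h.cfg.z_mem 0
  have q6 := h.cfg.z_mem 6
  have q2 := h.cfg.z_mem 2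
  have q8 := h.cfg.z_mem 8
  have q4 := h.cfg.z_mem 4
  have n06 := h.cfg.z_ne 0
  have n62 := h.cfg.z_ne 6
  have n28 := h.cfg.z_ne 2
  have n84 := h.cfg.z_ne 8
  have n40 := h.cfg.z_ne 4
  have p1 : v (6 + 9) - ee v (6 + 6) = v (2 + 3) - ee v 2 := by
    rw [show 6 + 9 = 2 + 3 + 10 by rfl, show 6 + 6 = 2 + 10 by rfl, h.cfg.v10, h.cfg.e10]
  have p2 : v (8 + 9) - ee v (8 + 6) = v (4 + 3) - ee v 4 := by
    rw [show 8 + 9 = 4 + 3 + 10 by rfl, show 8 + 6 = 4 + 10 by rfl, h.cfg.v10, h.cfg.e10]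
  have p3 : v (4 + 9) - ee v (4 + 6) = v (0 + 3) - ee v 0 := by
    rw [show 4 + 9 = 0 + 3 + 10 by rfl, show 4 + 6 = 0 + 10 by rfl, h.cfg.v10, h.cfg.e10]
  have p4 : v (0 + 9) - ee v (0 + 6) = v (6 + 3) - ee v 6 := rfl
  have p5 : v (2 + 9) - ee v (2 + 6) = v (8 + 3) - ee v 8 := rfl
  rw [p4] at n06
  rw [p1] at n62
  rw [p5] at n28
  rw [p2] at n84
  rw [p3] at n40
  have three : 3 ≤ cnt x (QI v) p := by
    by_cases c1 : v (0 + 3) - ee v 0 = v (2 + 3) - ee v 2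
    · by_cases c2 : v (6 + 3) - ee v 6 = v (8 + 3) - ee v 8
      · rw [← c2] at n84
        exact h.three_le n06 n40.symm n84 q0 q6 q4 t0 t6 t4
      · exact h.three_le n62 c2 n28 q6 q2 q8 t6 t2 t8
    · exact h.three_le n06 c1 n62 q0 q6 q2 t0 t6 t2
  omega

end Til

section extract
variable {D : Set (ℝ × ℝ)} {W : Finset (ℝ × ℝ)}

lemma noin (hc : ∀ w ∈ W, Convex ℝ (D \ {w})) (hD : ∀ w ∈ W, w ∈ D) (h0D : (0 : ℝ × ℝ) ∈ D)
    (h0 : (0 : ℝ × ℝ) ∉ W) {a b c : ℝ × ℝ} (ha : a ∈ W) (hb : b ∈ W) (hcc : c ∈ W)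
    (hab : a ≠ b) (hcb : c ≠ b) {s t : ℝ} (hs : 0 ≤ s) (ht : 0 ≤ t) (hst : s + t ≤ 1)
    (e : b = s • a + t • c) : False := by
  have C := hc b hb
  have hne : (0 : ℝ × ℝ) ≠ b := by rintro rfl; exact h0 hb
  have := C.sum_mem (t := (Finset.univ : Finset (Fin 3))) (w := ![s, t, 1 - s - t])
      (z := ![a, c, 0]) ?_ ?_ ?_
  · have h2 : s • a + t • c ∈ D \ {b} := by
      simpa [Fin.sum_univ_three] using this
    exact h2.2 e.symm
  · intro t _; fin_cases t <;> simp <;> linarith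
  · simp [Fin.sum_univ_three]
  · intro t _; fin_cases t <;> simp [hD a ha, hD c hcc, h0D, hab, hcb, hne]

lemma tri_pos (hc : ∀ w ∈ W, Convex ℝ (D \ {w})) (hD : ∀ w ∈ W, w ∈ D) (h0D : (0 : ℝ × ℝ) ∈ D)
    (h0 : (0 : ℝ × ℝ) ∉ W) {a b c : ℝ × ℝ} (ha : a ∈ W) (hb : b ∈ W) (hcc : c ∈ W)
    (h1 : 0 < cr a b) (h2 : 0 < cr b c) (h3 : 0 < cr a c) :
    0 < cr a b + cr b c - cr a c := by
  by_contra hn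
  have hne := h3.ne'
  refine noin hc hD h0D h0 ha hb hcc ?_ ?_ (div_nonneg h2.le h3.le) (div_nonneg h1.le h3.le) ?_ ?_
  · rintro rfl; rw [cr_self] at h1; exact lt_irrefl _ h1
  · rintro rfl; rw [cr_self] at h2; exact lt_irrefl _ h2
  · rw [← add_div, div_le_one h3]; linarith
  · apply Prod.ext
    · simp only [Prod.fst_add, Prod.smul_fst, smul_eq_mul]
      field_simp
      simp only [cr]; ring
    · simp only [Prod.snd_add, Prod.smul_snd, smul_eq_mul]
      field_simp
      simp only [cr]; ring

lemma exists_pre (hc : ∀ w ∈ W, Convex ℝ (D \ {w})) (hD : ∀ w ∈ W, w ∈ D)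
    (hneg : ∀ w ∈ W, - w ∈ W) (hcard : W.card = 10) :
    ∃ v : ℕ → ℝ × ℝ, Pre v ∧ Set.range v = (W : Set (ℝ × ℝ)) := by
  classical
  have h0 : (0 : ℝ × ℝ) ∉ W := by
    intro hz
    obtain ⟨w, hw, hw0⟩ := Finset.exists_mem_ne (s := W) (by omega) 0
    have := hc 0 hz (x := w) ⟨hD w hw, hw0⟩ (y := -w) ⟨hD _ (hneg w hw), by simpa using hw0⟩
      (show (0:ℝ) ≤ 1/2 by norm_num) (show (0:ℝ) ≤ 1/2 by norm_num) (by norm_num)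
    simp at this
  have h0D : (0 : ℝ × ℝ) ∈ D := by
    obtain ⟨w, hw⟩ : W.Nonempty := Finset.card_pos.1 (by omega)
    obtain ⟨u, hu, hu1⟩ := Finset.exists_mem_ne (s := W.erase w)
      (by rw [Finset.card_erase_of_mem hw]; omega) (-w)
    have hu' := Finset.mem_erase.1 hu
    have hw0 : w ≠ 0 := by rintro rfl; exact h0 hw
    have := hc u hu'.2 (x := w) ⟨hD w hw, fun h => hu'.1 h.symm⟩
      (y := -w) ⟨hD _ (hneg w hw), fun h => hu1 h.symm⟩
      (show (0:ℝ) ≤ 1/2 by norm_num) (show (0:ℝ) ≤ 1/2 by norm_num) (by norm_num)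
    simpa using this.1
  obtain ⟨t, ht⟩ := Infinite.exists_notMem_finset (W.image fun w : ℝ × ℝ => w.2 / w.1)
  set g : ℝ × ℝ → ℝ := fun w => w.2 - t * w.1 with hg
  have gneg : ∀ w, g (-w) = - g w := fun w => by simp [hg]; ring
  have g0 : ∀ w ∈ W, g w ≠ 0 := by
    intro w hw hz
    by_cases h1 : w.1 = 0
    · have h2 : w.2 = 0 := by simpa [hg, h1] using hz
      exact h0 (by rwa [show w = 0 from Prod.ext h1 h2] at hw)
    · apply ht
      refine Finset.mem_image.2 ⟨w, hw, ?_⟩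
      rw [div_eq_iff h1]
      simp only [hg] at hz
      linarith
  set U := W.filter fun w => 0 < g w with hU
  have hUcard : U.card = 5 := by
    have e1 := Finset.card_filter_add_card_filter_not (s := W) (fun w => 0 < g w)
    have e2 : (W.filter fun w => ¬ 0 < g w).card = U.card := by
      apply Finset.card_nbij' (fun w => -w) (fun w => -w)
      · intro w hw
        simp only [hU, Finset.coe_filter, Set.mem_ofPred_eq] at hw ⊢
        refine ⟨hneg w hw.1, ?_⟩
        rw [gneg]
        have := g0 w hw.1
        have := lt_of_le_of_ne (not_lt.1 hw.2) this
        linarith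
      · intro w hw
        simp only [hU, Finset.coe_filter, Set.mem_ofPred_eq] at hw ⊢
        refine ⟨hneg w hw.1, ?_⟩
        rw [gneg]
        linarith [hw.2]
      · intro w _; simp
      · intro w _; simp
    rw [e2, hcard] at e1
    change U.card + U.card = 10 at e1
    omega
  set r : ℝ × ℝ → ℝ := fun w => - w.1 / g w with hr
  have hcr : ∀ a ∈ U, ∀ b ∈ U, cr a b = g a * g b * (r b - r a) := by
    intro a ha b hb
    have h1 := g0 a (Finset.mem_filter.1 ha).1
    have h2 := g0 b (Finset.mem_filter.1 hb).1
    have : g a * g b * (r b - r a) = a.1 * g b - g a * b.1 := by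
      simp only [hr]; field_simp; ring
    rw [this]; simp only [hg, cr]; ring
  have aux : ∀ a ∈ U, ∀ b ∈ U, r a = r b → g a ≤ g b → a = b := by
    intro a ha b hb hab hle
    by_contra hne
    have ha' := Finset.mem_filter.1 ha
    have hb' := Finset.mem_filter.1 hb
    have h1 := g0 a ha'.1
    have h2 := g0 b hb'.1
    have hab' : a.1 * g b = b.1 * g a := by
      have := hcr a ha b hb
      rw [hab, sub_self, mul_zero] at this
      simp only [hg, cr] at this ⊢
      linarith
    have hab2 : a.2 * g b = b.2 * g a := by
      have e1 : a.2 = g a + t * a.1 := by simp [hg]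
      have e2 : b.2 = g b + t * b.1 := by simp [hg]
      rw [e1, e2]; linear_combination t * hab'
    refine noin hc hD h0D h0 hb'.1 ha'.1 hb'.1 (Ne.symm hne) (Ne.symm hne)
      (s := g a / g b) (t := 0) (div_nonneg ha'.2.le hb'.2.le) le_rfl ?_ ?_
    · rw [add_zero, div_le_one hb'.2]; exact hle
    · rw [zero_smul, add_zero]
      apply Prod.ext
      · simp only [Prod.smul_fst, smul_eq_mul]; field_simp; linarith
      · simp only [Prod.smul_snd, smul_eq_mul]; field_simp; linarith
  have rinj : Set.InjOn r (U : Set (ℝ × ℝ)) := by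
    intro a ha b hb hab
    rcases le_total (g a) (g b) with h | h
    · exact aux a ha b hb hab h
    · exact (aux b hb a ha hab.symm h).symm
  have hR : (U.image r).card = 5 := by rw [Finset.card_image_of_injOn rinj, hUcard]
  have ch : ∀ s : Fin 5, ∃ w ∈ U, r w = (U.image r).orderEmbOfFin hR s := fun s =>
    Finset.mem_image.1 ((U.image r).orderEmbOfFin_mem hR s)
  choose w hwU hwr using ch
  have wcr : ∀ a b : Fin 5, a < b → 0 < cr (w a) (w b) := by
    intro a b hab
    rw [hcr _ (hwU a) _ (hwU b), hwr, hwr]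
    have := ((U.image r).orderEmbOfFin hR).strictMono hab
    have h1 := (Finset.mem_filter.1 (hwU a)).2
    have h2 := (Finset.mem_filter.1 (hwU b)).2
    exact mul_pos (mul_pos h1 h2) (by linarith)
  have winj : Function.Injective w := by
    intro a b hab
    apply ((U.image r).orderEmbOfFin hR).injective
    rw [← hwr, ← hwr, hab]
  have wimg : Finset.univ.image w = U := by
    apply Finset.eq_of_subset_of_card_le
    · intro y hy
      obtain ⟨s, -, rfl⟩ := Finset.mem_image.1 hy
      exact hwU s
    · rw [Finset.card_image_of_injective _ winj, hUcard]; simp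
  set v : ℕ → ℝ × ℝ := fun j => ((-1 : ℝ) ^ (j / 5)) • w ⟨j % 5, Nat.mod_lt _ (by norm_num)⟩ with hv
  have anti : ∀ j, v (j + 5) = - v j := by
    intro j
    have e1 : (j + 5) / 5 = j / 5 + 1 := by omega
    have e2 : (j + 5) % 5 = j % 5 := by omega
    simp only [hv, e1, e2, pow_succ]
    simp
  have vlow : ∀ j (hj : j < 5), v j = w ⟨j, hj⟩ := by
    intro j hj
    have e1 : j / 5 = 0 := by omega
    have e2 : j % 5 = j := by omega
    simp only [hv, e1, e2, pow_zero, one_smul]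
  have red : ∀ (p : ℕ → Prop), (∀ j < 5, p j) → (∀ j, p j → p (j + 5)) → ∀ j, p j := by
    intro p h1 h2 j
    induction j using Nat.strong_induction_on with
    | _ j ih =>
      by_cases hj : j < 5
      · exact h1 j hj
      · have := h2 (j - 5) (ih _ (by omega))
        rwa [show j - 5 + 5 = j by omega] at this
  have vW : ∀ j, v j ∈ W := by
    apply red
    · intro j hj; rw [vlow j hj]; exact (Finset.mem_filter.1 (hwU _)).1
    · intro j hj; rw [anti]; exact hneg _ hj
  have ord : ∀ j t, 0 < t → t < 5 → 0 < cr (v j) (v (j + t)) := by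
    apply red (fun j => ∀ t, 0 < t → t < 5 → 0 < cr (v j) (v (j + t)))
    · intro j hj t h0 h5
      by_cases hjt : j + t < 5
      · rw [vlow j hj, vlow _ hjt]
        exact wcr _ _ (by simp [Fin.lt_def, h0])
      · obtain ⟨q, hq⟩ : ∃ q, j + t = q + 5 := ⟨j + t - 5, by omega⟩
        rw [hq, anti, cr_neg_right, ← cr_anti, vlow j hj, vlow q (by omega)]
        exact wcr _ _ (by simp only [Fin.lt_def]; omega)
    · intro j ih t h0 h5
      rw [show j + 5 + t = j + t + 5 by ring, anti, anti, cr_neg_left, cr_neg_right, neg_neg]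
      exact ih t h0 h5
  refine ⟨v, ⟨anti, ord, ?_⟩, ?_⟩
  · intro j s t hs hst ht
    have o := ord (j + s) (t - s) (by omega) (by omega)
    rw [show j + s + (t - s) = j + t by omega] at o
    exact tri_pos hc hD h0D h0 (vW _) (vW _) (vW _) (ord j s hs (by omega)) o
      (ord j t (by omega) ht)
  · apply Set.Subset.antisymm
    · rintro _ ⟨j, rfl⟩; exact vW j
    · have hUr : ∀ y ∈ U, ∃ j, v j = y := by
        intro y hy
        rw [← wimg] at hy
        obtain ⟨s, -, rfl⟩ := Finset.mem_image.1 hy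
        exact ⟨s, vlow s s.2⟩
      intro y hy
      rcases lt_or_gt_of_ne (g0 y hy) with h | h
      · obtain ⟨j, hj⟩ := hUr (-y) (Finset.mem_filter.2 ⟨hneg y hy, by rw [gneg]; linarith⟩)
        exact ⟨j + 5, by rw [anti, hj, neg_neg]⟩
      · exact hUr y (Finset.mem_filter.2 ⟨hy, h⟩)

end extract

/-- If a centrally symmetric convex decagon (a convex polygon with exactly 10 vertices,
symmetric about a point) admits a `k`-fold translative tiling of the plane, then
`k ≥ 5`; that is, `τ(P) ≥ 5`. -/
theorem tau_decagon_ge (P : Set (ℝ × ℝ)) (V : Finset (ℝ × ℝ))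
    (hP : IsConvexPolygon P V) (hV : V.card = 10) (hsym : IsCentrallySymmetric P)
    (k : ℕ) (hk : 0 < k) (ι : Type) (x : ι → ℝ × ℝ)
    (htile : IsKFoldTranslativeTiling P x k) :
    5 ≤ k := by
  classical
  obtain ⟨hPV, hext, -⟩ := hP
  obtain ⟨c, hc⟩ := hsym
  obtain ⟨hfin, hcov, hpack⟩ := htile
  have hPc : Convex ℝ P := by rw [hPV]; exact convex_convexHull ℝ _
  have hVP : ∀ w ∈ V, w ∈ P := fun w hw => (hext w hw).1
  have hsymV : ∀ w ∈ V, (2 • c - w) ∈ V := by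
    intro w hw
    have h1 := (hPc.mem_extremePoints_iff_convex_diff.1 (hext w hw)).2
    have h2 : 2 • c - w ∈ Set.extremePoints ℝ P := by
      rw [hPc.mem_extremePoints_iff_convex_diff]
      refine ⟨hc w (hVP w hw), ?_⟩
      intro a ha b hb s t hs ht hst
      refine ⟨hPc ha.1 hb.1 hs ht hst, ?_⟩
      have ha' : 2 • c - a ∈ P \ {w} := ⟨hc a ha.1, fun h => ha.2 (by
        rw [Set.mem_singleton_iff] at h ⊢; rw [← h]; abel)⟩
      have hb' : 2 • c - b ∈ P \ {w} := ⟨hc b hb.1, fun h => hb.2 (by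
        rw [Set.mem_singleton_iff] at h ⊢; rw [← h]; abel)⟩
      intro he
      rw [Set.mem_singleton_iff] at he
      apply (h1 ha' hb' hs ht hst).2
      rw [Set.mem_singleton_iff]
      have e1 : w = 2 • c - (s • a + t • b) := by rw [he]; abel
      rw [e1]
      have e2 : (2 : ℕ) • c = s • ((2 : ℕ) • c) + t • ((2 : ℕ) • c) := by
        rw [← add_smul, hst, one_smul]
      nth_rw 3 [e2]
      rw [smul_sub, smul_sub]; abel
    rw [hPV] at h2
    exact extremePoints_convexHull_subset h2
  set W : Finset (ℝ × ℝ) := V.image fun w => w - c with hW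
  set D : Set (ℝ × ℝ) := (fun y => y + c) ⁻¹' P with hD
  have hWc : W.card = 10 := by
    rw [hW, Finset.card_image_of_injective _ (fun a b h => sub_left_injective h), hV]
  obtain ⟨v, hv, hrange⟩ := exists_pre (D := D) (W := W)
    (by
      intro y hy
      obtain ⟨w, hw, rfl⟩ := Finset.mem_image.1 hy
      have h1 := (hPc.mem_extremePoints_iff_convex_diff.1 (hext w hw)).2
      have h2 := h1.translate_preimage_left c
      have e : D \ {w - c} = (fun y => y + c) ⁻¹' (P \ {w}) := by
        ext z
        show (z + c ∈ P ∧ ¬ z = w - c) ↔ (z + c ∈ P ∧ ¬ z + c = w)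
        rw [eq_sub_iff_add_eq]
      rw [e]
      exact h2)
    (by
      intro y hy
      obtain ⟨w, hw, rfl⟩ := Finset.mem_image.1 hy
      simpa [hD] using hVP w hw)
    (by
      intro y hy
      obtain ⟨w, hw, rfl⟩ := Finset.mem_image.1 hy
      refine Finset.mem_image.2 ⟨_, hsymV w hw, ?_⟩
      rw [two_smul]; abel)
    hWc
  have hQ : ∀ y, y ∈ QQ v ↔ y + c ∈ P := by
    have e : QQ v = P - {c} := by
      rw [hv.Q_eq, hrange, hW, hPV, ← convexHull_singleton (𝕜 := ℝ) c, ← convexHull_sub]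
      congr 1
      simp
    intro y
    rw [e]
    simp [sub_eq_iff_eq_add]
  have hI : ∀ y, y ∈ QI v → y + c ∈ interior P := by
    intro y hy
    have h1 := Pre.QI_int hv.cfg hy
    have e : QQ v = (Homeomorph.addRight c) ⁻¹' P := by
      ext z; exact hQ z
    rw [e, ← Homeomorph.preimage_interior] at h1
    exact h1
  have hT : Til v (fun i => x i + c) k := by
    refine ⟨hv.cfg, ?_, ?_, ?_, ?_⟩
    · intro R
      refine (hfin (R + ‖c‖)).subset ?_
      intro i hi
      have hi' : ‖x i + c‖ ≤ R := hi
      show ‖x i‖ ≤ R + ‖c‖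
      have := norm_sub_le (x i + c) c
      rw [add_sub_cancel_right] at this
      linarith
    · have hb : Bornology.IsBounded (QQ v) := by
        rw [hv.Q_eq, hrange]
        exact (W.finite_toSet.isCompact_convexHull ℝ).isBounded
      obtain ⟨B, hB⟩ := hb.exists_norm_le
      exact ⟨B, hB⟩
    · intro p
      obtain ⟨s, h1, h2⟩ := hcov p
      refine ⟨s, h1, fun i hi => ?_⟩
      rw [hQ]
      convert h2 i hi using 1
      abel
    · intro p s hs
      apply hpack p s
      intro i hi
      convert hI _ (hs i hi) using 1
      abel
  obtain ⟨s, h1, -⟩ := hcov 0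
  obtain ⟨i0, -⟩ : s.Nonempty := Finset.card_pos.1 (by omega)
  exact hT.main i0
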